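/- arXiv:1511.01937 — 2 statements merged into one kernel-verified Lean document; each statement's English description precedes it below -/
import Mathlib

section
/- Let f : D → {0,1} be a partial Boolean function with D ⊆ {0,1}^n. Then R(f ∘ OR_m) = Ω(m · R(f)) and R_0(f ∘ OR_m) = Ω(m · R_0(f)). Consequently, R(f ∘ AND_m ∘ OR_m) = Ω(m^2 · R(f)) and R_0(f ∘ AND_m ∘ OR_m) = Ω(m^2 · R_0(f)). -/
open scoped BigOperators ENNReal

namespace QC

/-! ### Inputs and partial functions -/

/-- An input assigns to each index `i` a symbol from the alphabet `Fin (α i)`. -/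
abbrev Input (ι : Type) (α : ι → ℕ) := ∀ i : ι, Fin (α i)

/-- A (possibly partial) Boolean-valued query function; `none` means the input
is outside the promise/domain. -/
abbrev PartialFn (ι : Type) (α : ι → ℕ) := Input ι α → Option Bool

/-- A total function has every input in its domain. -/
def TotalFn {ι : Type} {α : ι → ℕ} (f : PartialFn ι α) : Prop := ∀ x, f x ≠ none

/-- Classical truth value of a proposition, as a `Bool`. -/
noncomputable def ofProp (P : Prop) : Bool := @decide P (Classical.propDecidable P)

/-! ### Decision trees and classical query complexity -/

/-- Decision trees over index set `ι` with alphabets `α` and leaf labels `L`. -/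
inductive DTree (ι : Type) (α : ι → ℕ) (L : Type) : Type
  | leaf : L → DTree ι α L
  | node : (i : ι) → (Fin (α i) → DTree ι α L) → DTree ι α L

namespace DTree

variable {ι : Type} {α : ι → ℕ} {L : Type}

/-- Evaluate a decision tree on an input. -/
def eval : DTree ι α L → Input ι α → L
  | leaf b, _ => b
  | node i child, x => eval (child (x i)) x

/-- The number of queries the tree makes on a given input. -/
def cost : DTree ι α L → Input ι α → ℕ
  | leaf _, _ => 0
  | node i child, x => cost (child (x i)) x + 1

/-- The depth (worst-case number of queries) of a decision tree. -/
def depth : DTree ι α L → ℕ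
  | leaf _ => 0
  | node _ child => (Finset.univ.sup fun a => depth (child a)) + 1

end DTree

variable {ι : Type} {α : ι → ℕ}

/-- Deterministic query complexity `D(f)`. -/
noncomputable def Dq (f : PartialFn ι α) : ℕ :=
  sInf {d | ∃ T : DTree ι α (Option Bool), T.depth ≤ d ∧
    ∀ x b, f x = some b → T.eval x = some b}

/-- Bounded-error randomized query complexity `R(f)` (worst-case queries,
success probability at least 2/3 on every domain input). -/
noncomputable def Rq (f : PartialFn ι α) : ℕ :=
  sInf {d | ∃ μ : PMF (DTree ι α (Option Bool)),
    (∀ T ∈ μ.support, T.depth ≤ d) ∧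
    ∀ x b, f x = some b → 2/3 ≤ μ.toOuterMeasure {T | T.eval x = some b}}

/-- Zero-error randomized query complexity `R₀(f)` (worst-case queries): the
algorithm never errs, and outputs `none` ("don't know") with probability at most 1/2. -/
noncomputable def R0q (f : PartialFn ι α) : ℕ :=
  sInf {d | ∃ μ : PMF (DTree ι α (Option Bool)),
    (∀ T ∈ μ.support, T.depth ≤ d) ∧
    (∀ T ∈ μ.support, ∀ x b, f x = some b → T.eval x = some b ∨ T.eval x = none) ∧
    ∀ x b, f x = some b → μ.toOuterMeasure {T | T.eval x = none} ≤ 1/2}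

/-- Zero-error randomized query complexity, measured by the worst-case *expected*
number of queries over domain inputs (value in `ℝ≥0∞`). -/
noncomputable def R0expq (f : PartialFn ι α) : ℝ≥0∞ :=
  sInf {c | ∃ μ : PMF (DTree ι α (Option Bool)),
    (∀ T ∈ μ.support, ∀ x b, f x = some b → T.eval x = some b ∨ T.eval x = none) ∧
    (∀ x b, f x = some b → μ.toOuterMeasure {T | T.eval x = none} ≤ 1/2) ∧
    (∀ x b, f x = some b → ∑' T, μ T * (T.cost x : ℝ≥0∞) ≤ c)}

/-- One-sided-error randomized query complexity `R₁(f)`: accept every 1-input with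
probability at least 2/3, and never accept a 0-input. -/
noncomputable def R1q (f : PartialFn ι α) : ℕ :=
  sInf {d | ∃ μ : PMF (DTree ι α (Option Bool)),
    (∀ T ∈ μ.support, T.depth ≤ d) ∧
    (∀ x, f x = some true → 2/3 ≤ μ.toOuterMeasure {T | T.eval x = some true}) ∧
    (∀ x, f x = some false → ∀ T ∈ μ.support, T.eval x ≠ some true)}

/-! ### Quantum query complexity -/

/-- The index set of the state space of a quantum query algorithm:
a query register `Σ i, Fin (α i)` together with a workspace register `Fin W`. -/
abbrev QIdx (ι : Type) (α : ι → ℕ) (W : ℕ) := (Σ i : ι, Fin (α i)) × Fin W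

variable [Fintype ι] [DecidableEq ι]

/-- The standard query oracle for input `x`: the permutation matrix sending the basis
vector `|i,a⟩|w⟩` to `|i, a + x i⟩|w⟩` (addition modulo `α i`). -/
noncomputable def oracleMatrix (W : ℕ) (x : Input ι α) :
    Matrix (QIdx ι α W) (QIdx ι α W) ℂ :=
  Matrix.of fun j j' =>
    if j.2 = j'.2 ∧ j.1 = ⟨j'.1.1, j'.1.2 + x j'.1.1⟩ then 1 else 0

/-- The product `U_T · O · U_{T-1} · O ⋯ O · U_0` of unitaries interleaved with oracle
calls, defining a `T`-query quantum algorithm. -/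
noncomputable def qProd {τ : Type} [Fintype τ] (U : ℕ → Matrix τ τ ℂ) (Ox : Matrix τ τ ℂ) :
    ℕ → Matrix τ τ ℂ
  | 0 => U 0
  | t + 1 => U (t + 1) * Ox * qProd U Ox t

/-- A quantum query algorithm: a number `T` of queries, a workspace size `W`,
unitaries `U 0, …, U T`, a unit initial state, and a measurement assigning to each
basis state an output in `Option Bool` (`none` = "don't know"). -/
structure QAlg (ι : Type) [Fintype ι] [DecidableEq ι] (α : ι → ℕ) where
  T : ℕ
  W : ℕ
  U : ℕ → Matrix (QIdx ι α W) (QIdx ι α W) ℂ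
  unitary : ∀ t, U t ∈ Matrix.unitaryGroup (QIdx ι α W) ℂ
  init : QIdx ι α W → ℂ
  init_norm : ∑ j, ‖init j‖ ^ 2 = 1
  out : QIdx ι α W → Option Bool

/-- The final state of a quantum algorithm on input `x`. -/
noncomputable def QAlg.finalState (A : QAlg ι α) (x : Input ι α) : QIdx ι α A.W → ℂ :=
  (qProd A.U (oracleMatrix A.W x) A.T).mulVec A.init

/-- The probability that the algorithm outputs `v` on input `x`. -/
noncomputable def QAlg.outProb (A : QAlg ι α) (x : Input ι α) (v : Option Bool) : ℝ :=
  ∑ j, if A.out j = v then ‖A.finalState x j‖ ^ 2 else 0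

/-- Bounded-error quantum query complexity `Q(f)`. -/
noncomputable def Qq (f : PartialFn ι α) : ℕ :=
  sInf {d | ∃ A : QAlg ι α, A.T ≤ d ∧
    ∀ x b, f x = some b → (2 : ℝ)/3 ≤ A.outProb x (some b)}

/-- Exact quantum query complexity `Q_E(f)`. -/
noncomputable def QEq (f : PartialFn ι α) : ℕ :=
  sInf {d | ∃ A : QAlg ι α, A.T ≤ d ∧
    ∀ x b, f x = some b → A.outProb x (some b) = 1}

/-- One-sided-error quantum query complexity `Q₁(f)`. -/
noncomputable def Q1q (f : PartialFn ι α) : ℕ :=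
  sInf {d | ∃ A : QAlg ι α, A.T ≤ d ∧
    (∀ x, f x = some true → (2 : ℝ)/3 ≤ A.outProb x (some true)) ∧
    (∀ x, f x = some false → A.outProb x (some true) = 0)}

/-- Zero-error quantum query complexity `Q₀(f)`: never wrong, outputs `none`
with probability at most 1/2. -/
noncomputable def Q0q (f : PartialFn ι α) : ℕ :=
  sInf {d | ∃ A : QAlg ι α, A.T ≤ d ∧
    ∀ x b, f x = some b → A.outProb x (some !b) = 0 ∧ A.outProb x none ≤ 1/2}

/-! ### Certificate complexity -/

/-- A partial assignment `ρ` is consistent with an input `x`. -/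
def Consistent (ρ : ∀ i : ι, Option (Fin (α i))) (x : Input ι α) : Prop :=
  ∀ i v, ρ i = some v → x i = v

/-- The number of fixed positions of a partial assignment. -/
noncomputable def certSize (ρ : ∀ i : ι, Option (Fin (α i))) : ℕ :=
  Nat.card {i // (ρ i).isSome}

/-- The certificate complexity of `f` at input `x`: the least size of a partial
assignment consistent with `x` forcing the value `f x` on all domain inputs. -/
noncomputable def CxAt (f : PartialFn ι α) (x : Input ι α) : ℕ :=
  sInf {s | ∃ ρ, Consistent ρ x ∧ (∀ y, Consistent ρ y → f y = none ∨ f y = f x) ∧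
    certSize ρ ≤ s}

/-- Certificate complexity `C(f)`. -/
noncomputable def Cq (f : PartialFn ι α) : ℕ :=
  sSup {s | ∃ x, f x ≠ none ∧ s = CxAt f x}

/-- One-certificate complexity `C¹(f)`. -/
noncomputable def C1q (f : PartialFn ι α) : ℕ :=
  sSup {s | ∃ x, f x = some true ∧ s = CxAt f x}

/-! ### Polynomial degree -/

/-- Exact polynomial degree `deg(f)`: least degree of a real polynomial agreeing
with `f` (as a 0/1 function of the numerical values of the input symbols) on its domain. -/
noncomputable def degq (f : PartialFn ι α) : ℕ :=
  sInf {d | ∃ p : MvPolynomial ι ℝ, p.totalDegree ≤ d ∧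
    ∀ x b, f x = some b →
      MvPolynomial.eval (fun i => ((x i : ℕ) : ℝ)) p = if b then 1 else 0}

/-- Approximate polynomial degree `adeg(f)`: least degree of a real polynomial
approximating `f` pointwise to error 1/3 on its domain. -/
noncomputable def adegq (f : PartialFn ι α) : ℕ :=
  sInf {d | ∃ p : MvPolynomial ι ℝ, p.totalDegree ≤ d ∧
    ∀ x b, f x = some b →
      |MvPolynomial.eval (fun i => ((x i : ℕ) : ℝ)) p - if b then 1 else 0| ≤ 1/3}

end QC
/-! ### Certifying functions and cheat sheets -/

namespace QC

variable {ι : Type} {α : ι → ℕ}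

/-- `φ` is a certifying function for the partial function `f`: it accepts `(x, y)`
only when `x` is in the domain of `f` and the first bit of `y` equals `f x`; every
domain input has some accepted certificate `y`; and the all-zeros `y` is never accepted. -/
def IsCertifying {k : ℕ} (hk : 0 < k) (f : PartialFn ι α)
    (φ : Input ι α → (Fin k → Fin 2) → Bool) : Prop :=
  (∀ x y, f x = none → φ x y = false) ∧
  (∀ x y b, f x = some b → y ⟨0, hk⟩ ≠ (if b then 1 else 0) → φ x y = false) ∧
  (∀ x b, f x = some b → ∃ y, φ x y = true) ∧
  (∀ x, φ x (fun _ => 0) = false)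

/-- The index set of the input to a certifying function, viewed as a query function:
the original input together with `k` certificate bits. -/
abbrev CertIdx (ι : Type) (k : ℕ) := ι ⊕ Fin k

/-- Alphabets for `CertIdx`. -/
def certAlphabet (α : ι → ℕ) (k : ℕ) : CertIdx ι k → ℕ := Sum.elim α fun _ => 2

/-- A certifying function viewed as a total query function on input ⊕ certificate bits. -/
def certFn {k : ℕ} (φ : Input ι α → (Fin k → Fin 2) → Bool) :
    PartialFn (CertIdx ι k) (certAlphabet α k) :=
  fun z => some (φ (fun i => z (Sum.inl i)) (fun q => z (Sum.inr q)))

/-- The index set of the input to the cheat sheet version of a function: `c` copies of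
the original input, followed by `2^c` cells each holding `c` certificate strings of `k` bits. -/
abbrev CSIdx (ι : Type) (c k : ℕ) := (Fin c × ι) ⊕ (Fin (2 ^ c) × Fin c × Fin k)

/-- Alphabets for `CSIdx`. -/
def csAlphabet (α : ι → ℕ) (c k : ℕ) : CSIdx ι c k → ℕ :=
  Sum.elim (fun p => α p.2) fun _ => 2

/-- The `i`-th copy of the original input inside a cheat sheet input. -/
def csX {c k : ℕ} (z : Input (CSIdx ι c k) (csAlphabet α c k)) (i : Fin c) : Input ι α :=
  fun p => z (Sum.inl (i, p))

/-- The `i`-th certificate string in the `ℓ`-th cheat sheet cell. -/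
def csY {c k : ℕ} (z : Input (CSIdx ι c k) (csAlphabet α c k)) (ℓ : Fin (2 ^ c))
    (i : Fin c) : Fin k → Fin 2 :=
  fun q => z (Sum.inr (ℓ, i, q))

/-- The number in `[2^c]` whose binary representation is the bit string `b`. -/
def binToFin (c : ℕ) (b : Fin c → Bool) : Fin (2 ^ c) :=
  ⟨(∑ i, if b i then 2 ^ (i : ℕ) else 0) % 2 ^ c, Nat.mod_lt _ (by positivity)⟩

/-- The defining condition of the cheat sheet function: all `c` copies lie in the
domain of `f`, and the cell addressed by their `f`-values holds certificates
accepted by `φ` for each copy. -/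
def CSCond {c k : ℕ} (f : PartialFn ι α) (φ : Input ι α → (Fin k → Fin 2) → Bool)
    (z : Input (CSIdx ι c k) (csAlphabet α c k)) : Prop :=
  ∃ bvec : Fin c → Bool, (∀ i, f (csX z i) = some (bvec i)) ∧
    ∀ i, φ (csX z i) (csY z (binToFin c bvec) i) = true

/-- The cheat sheet version of `f` with respect to the certifying function `φ`,
with `c` copies of `f`. It is a total function. -/
noncomputable def cheatSheet (c : ℕ) {k : ℕ} (f : PartialFn ι α)
    (φ : Input ι α → (Fin k → Fin 2) → Bool) :
    PartialFn (CSIdx ι c k) (csAlphabet α c k) :=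
  fun z => some (ofProp (CSCond f φ z))

/-! ### OR / AND compositions -/

/-- The `OR` function on `m` bits (alphabet `Fin 2`). -/
def orFn (m : ℕ) (z : Fin m → Fin 2) : Fin 2 := if ∃ j, z j = 1 then 1 else 0

/-- The `AND` function on `m` bits (alphabet `Fin 2`). -/
def andFn (m : ℕ) (z : Fin m → Fin 2) : Fin 2 := if ∀ j, z j = 1 then 1 else 0

/-- The composition `f ∘ OR_m`. -/
def composeOr {n : ℕ} (f : PartialFn (Fin n) fun _ => 2) (m : ℕ) :
    PartialFn (Fin n × Fin m) (fun _ => 2) :=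
  fun z => f fun i => orFn m fun j => z (i, j)

/-- The composition `f ∘ AND_m ∘ OR_m`. -/
def composeAndOr {n : ℕ} (f : PartialFn (Fin n) fun _ => 2) (m : ℕ) :
    PartialFn (Fin n × Fin m × Fin m) (fun _ => 2) :=
  fun z => f fun i => andFn m fun j => orFn m fun l => z (i, j, l)

/-! ### k-SUM, Block k-sum, BKK and its recursive composition -/

/-- The `k`-SUM function on `n` numbers from `[q]`: is there a set of `k` of the
input numbers summing to `0` modulo `q`? -/
noncomputable def kSUMfn (n q k : ℕ) : PartialFn (Fin n) (fun _ => q) :=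
  fun x => some (ofProp (∃ S : Finset (Fin n), S.card = k ∧
    (∑ i ∈ S, (x i : ℕ)) % q = 0))

/-- Number of ones in a block of bits. -/
def onesCount {B : ℕ} (z : Fin B → Fin 2) : ℕ := (Finset.univ.filter fun j => z j = 1).card

/-- The number encoded in binary by a block of bits. -/
def blockVal {B : ℕ} (z : Fin B → Fin 2) : ℕ := ∑ j, if z j = 1 then 2 ^ (j : ℕ) else 0

/-- A block is balanced if it has an equal number of 0s and 1s. -/
def isBalanced {B : ℕ} (z : Fin B → Fin 2) : Prop := 2 * onesCount z = B

/-- Block `k`-sum on `nb` blocks of `B` bits each: value 1 iff there are `k` balanced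
blocks whose encoded numbers sum to 0 (mod `2^B`) and every other block has at least
as many 1s as 0s. -/
noncomputable def blockKSumBool (nb B k : ℕ) (z : Fin nb × Fin B → Fin 2) : Bool :=
  ofProp (∃ S : Finset (Fin nb), S.card = k ∧
    (∀ i ∈ S, isBalanced fun j => z (i, j)) ∧
    (∑ i ∈ S, blockVal fun j => z (i, j)) % 2 ^ B = 0 ∧
    ∀ i ∉ S, B ≤ 2 * onesCount fun j => z (i, j))

/-- The Boolean version of `k`-SUM on `m` numbers of `w` bits each (mod `2^w`). -/
noncomputable def kSumBool (m w k : ℕ) (z : Fin m × Fin w → Fin 2) : Bool :=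
  ofProp (∃ S : Finset (Fin m), S.card = k ∧
    (∑ i ∈ S, blockVal fun j => z (i, j)) % 2 ^ w = 0)

/-- Block size of the outer Block `k`-sum in `BKK` on (roughly) `n` outer bits. -/
def bkkB (n k : ℕ) : ℕ := 10 * k * Nat.log 2 n
/-- Number of blocks of the outer Block `k`-sum in `BKK`. -/
def bkkNB (n k : ℕ) : ℕ := n / bkkB n k
/-- Bits per number of the inner Boolean `k`-SUM in `BKK`. -/
def bkkW (n k : ℕ) : ℕ := k * Nat.log 2 n
/-- Number of numbers of the inner Boolean `k`-SUM in `BKK`. -/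
def bkkM (n k : ℕ) : ℕ := n / bkkW n k

/-- The index set of the inputs of `BKK_{n²,k}` (one inner `k`-SUM input bit for
each outer Block `k`-sum input bit; roughly `n²` bits in total). -/
abbrev BKKIdx (n k : ℕ) := (Fin (bkkNB n k) × Fin (bkkB n k)) × (Fin (bkkM n k) × Fin (bkkW n k))

/-- `BKK_{n²,k}`: Block `k`-sum composed with the Boolean version of `k`-SUM. -/
noncomputable def bkkBool (n k : ℕ) (z : BKKIdx n k → Fin 2) : Bool :=
  blockKSumBool (bkkNB n k) (bkkB n k) k fun ob =>
    if kSumBool (bkkM n k) (bkkW n k) k (fun p => z (ob, p)) then 1 else 0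

/-- `BKK_{n²,k}` as a total query function. -/
noncomputable def BKKfn (n k : ℕ) : PartialFn (BKKIdx n k) (fun _ => 2) :=
  fun z => some (bkkBool n k z)

/-- The `d`-fold self-composition of a total Boolean function `g`: a depth-`d` tree
each of whose internal nodes is a copy of `g`; input bits are indexed by root-to-leaf
paths `Fin d → I`. -/
noncomputable def iterFn {I : Type} (g : (I → Fin 2) → Bool) :
    (d : ℕ) → ((Fin d → I) → Fin 2) → Bool
  | 0, z => decide (z (fun i => i.elim0) = 1)
  | d + 1, z => g fun a => if iterFn g d (fun v => z (Fin.cons a v)) then 1 else 0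

/-- The recursion depth used for `RecBKK`: `d = (4/25)·log n / log log n`. -/
def recD (n : ℕ) : ℕ := 4 * Nat.log 2 n / (25 * Nat.log 2 (Nat.log 2 n))

/-- The index set of the inputs of `RecBKK`. -/
abbrev RecIdx (n : ℕ) := Fin (recD n) → BKKIdx n (Nat.log 2 n)

/-- `RecBKK`: the `recD n`-fold self-composition of `BKK` with `k = log n`. -/
noncomputable def RecBKKfn (n : ℕ) : PartialFn (RecIdx n) (fun _ => 2) :=
  fun z => some (iterFn (bkkBool n (Nat.log 2 n)) (recD n) z)

/-- The nominal input size `N = n^{2d}` of `RecBKK`. -/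
def recN (n : ℕ) : ℕ := n ^ (2 * recD n)

end QC


namespace QC

namespace DTree

section Basic

variable {ι : Type} {α : ι → ℕ} {L : Type}

theorem cost_le_depth (T : DTree ι α L) (x : Input ι α) : T.cost x ≤ T.depth := by
  induction T with
  | leaf l => simp [cost]
  | node i c ih =>
    simp only [cost, depth]
    have h := Finset.le_sup (f := fun a => depth (c a)) (Finset.mem_univ (x i))
    have := ih (x i)
    omega

/-- Cut a tree off after `t` queries, answering `l` on the paths that are cut. -/
def trunc (l : L) : DTree ι α L → ℕ → DTree ι α L
  | leaf a, _ => leaf a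
  | node _ _, 0 => leaf l
  | node i c, t + 1 => node i fun a => trunc l (c a) t

theorem depth_trunc_le (l : L) (T : DTree ι α L) (t : ℕ) : (trunc l T t).depth ≤ t := by
  induction T generalizing t with
  | leaf a => simp [trunc, depth]
  | node i c ih =>
    cases t with
    | zero => simp [trunc, depth]
    | succ t =>
      simp only [trunc, depth, add_le_add_iff_right]
      exact Finset.sup_le fun a _ => ih a t

theorem eval_trunc_of_cost_le (l : L) (T : DTree ι α L) (t : ℕ) (x : Input ι α)
    (h : T.cost x ≤ t) : (trunc l T t).eval x = T.eval x := by
  induction T generalizing t with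
  | leaf a => rfl
  | node i c ih =>
    cases t with
    | zero => simp [cost] at h
    | succ t =>
      simp only [cost, add_le_add_iff_right] at h
      exact ih _ t h

theorem eval_trunc_eq_or (l : L) (T : DTree ι α L) (t : ℕ) (x : Input ι α) :
    (trunc l T t).eval x = T.eval x ∨ (trunc l T t).eval x = l := by
  induction T generalizing t with
  | leaf a => exact Or.inl rfl
  | node i c ih =>
    cases t with
    | zero => exact Or.inr rfl
    | succ t => exact ih _ t

/-- Sequential composition: run a tree, then a tree chosen by its output. -/
def andThen {M : Type} : DTree ι α L → (L → DTree ι α M) → DTree ι α M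
  | leaf a, F => F a
  | node i c, F => node i fun a => andThen (c a) F

theorem eval_andThen {M : Type} (T : DTree ι α L) (F : L → DTree ι α M) (x : Input ι α) :
    (T.andThen F).eval x = (F (T.eval x)).eval x := by
  induction T with
  | leaf a => rfl
  | node i c ih => exact ih _

theorem depth_andThen_le {M : Type} (T : DTree ι α L) (F : L → DTree ι α M) {s t : ℕ}
    (hT : T.depth ≤ s) (hF : ∀ a, (F a).depth ≤ t) : (T.andThen F).depth ≤ s + t := by
  induction T generalizing s with
  | leaf a => exact (hF a).trans (Nat.le_add_left _ _)
  | node i c ih =>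
    simp only [depth] at hT
    obtain ⟨s, rfl⟩ : ∃ r, s = r + 1 := ⟨s - 1, by omega⟩
    simp only [add_le_add_iff_right] at hT
    have h : (Finset.univ.sup fun a => depth ((c a).andThen F)) ≤ s + t :=
      Finset.sup_le fun a _ => ih a
        ((Finset.le_sup (f := fun a => depth (c a)) (Finset.mem_univ a)).trans hT)
    simp only [andThen, depth]
    omega

variable [DecidableEq ι]

/-- The set of indices queried by a tree on a given input. -/
def queried : DTree ι α L → Input ι α → Finset ι
  | leaf _, _ => ∅
  | node i c, x => insert i (queried (c (x i)) x)

/-- Remove repeated queries from a tree, given the values `ρ` that are already known. -/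
def dedup : DTree ι α L → (∀ i, Option (Fin (α i))) → DTree ι α L
  | leaf a, _ => leaf a
  | node i c, ρ =>
    match ρ i with
    | some a => dedup (c a) ρ
    | none => node i fun a => dedup (c a) (Function.update ρ i (some a))

theorem eval_dedup (T : DTree ι α L) (ρ : ∀ i, Option (Fin (α i))) (x : Input ι α)
    (hρ : ∀ i v, ρ i = some v → x i = v) : (T.dedup ρ).eval x = T.eval x := by
  induction T generalizing ρ with
  | leaf a => rfl
  | node i c ih =>
    rw [dedup]
    split
    · rename_i a ha
      rw [ih a ρ hρ, eval, hρ i a ha]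
    · simp only [eval]
      refine ih _ _ fun i' v hv => ?_
      by_cases h : i' = i
      · subst h
        simpa using hv
      · rw [Function.update_of_ne h] at hv
        exact hρ _ _ hv

theorem cost_dedup_le (T : DTree ι α L) (ρ : ∀ i, Option (Fin (α i))) (x : Input ι α)
    (hρ : ∀ i v, ρ i = some v → x i = v) :
    (T.dedup ρ).cost x ≤ ((T.queried x).filter fun i => ρ i = none).card := by
  induction T generalizing ρ with
  | leaf a => simp [dedup, cost]
  | node i c ih =>
    rw [dedup]
    split
    · rename_i a ha
      refine (ih a ρ hρ).trans (Finset.card_le_card ?_)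
      rw [queried, hρ i a ha]
      exact Finset.filter_subset_filter _ (Finset.subset_insert _ _)
    · rename_i hi
      simp only [cost]
      have h := ih (x i) (Function.update ρ i (some (x i))) fun i' v hv => by
        by_cases h : i' = i
        · subst h
          simpa using hv
        · rw [Function.update_of_ne h] at hv
          exact hρ _ _ hv
      refine (Nat.succ_le_succ h).trans ?_
      rw [Nat.succ_eq_add_one, ← Finset.card_insert_of_notMem (a := i) (by simp)]
      refine Finset.card_le_card fun i' hi' => ?_
      rw [queried]
      rcases Finset.mem_insert.1 hi' with rfl | hi'
      · simp [hi]
      · rw [Finset.mem_filter] at hi' ⊢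
        by_cases h : i' = i
        · subst h
          simp at hi'
        · rw [Function.update_of_ne h] at hi'
          exact ⟨Finset.mem_insert_of_mem hi'.1, hi'.2⟩

end Basic

section Planting

variable {ι κ : Type} {m : ℕ} {L : Type}

/-- Hide the bit `x i` at position `j i` of the `i`-th block of `m` bits, all other bits being
`b`. The bit `k` lies at position `(e k).2` of the block `(e k).1`. -/
def plant (e : κ → ι × Fin m) (b : Fin 2) (j : ι → Fin m) (x : Input ι fun _ => 2) :
    Input κ fun _ => 2 :=
  fun k => if (e k).2 = j (e k).1 then x (e k).1 else b

/-- Simulate a tree on the planted input `plant e b j x` by queries to `x`. -/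
def unplant (e : κ → ι × Fin m) (b : Fin 2) (j : ι → Fin m) :
    DTree κ (fun _ => 2) L → DTree ι (fun _ => 2) L
  | leaf l => leaf l
  | node k c =>
    if (e k).2 = j (e k).1 then node (e k).1 fun a => unplant e b j (c a)
    else unplant e b j (c b)

variable (e : κ → ι × Fin m) (b : Fin 2)

theorem eval_unplant (j : ι → Fin m) (T : DTree κ (fun _ => 2) L) (x : Input ι fun _ => 2) :
    (T.unplant e b j).eval x = T.eval (plant e b j x) := by
  induction T with
  | leaf l => rfl
  | node k c ih =>
    rw [unplant, eval]
    by_cases h : (e k).2 = j (e k).1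
    · simp [h, eval, ih, plant]
    · simp [h, ih, plant]

variable [DecidableEq ι]

/-- The number of queries a tree makes to block `i`. -/
def blockCost (e : κ → ι × Fin m) (i : ι) :
    DTree κ (fun _ => 2) L → Input κ (fun _ => 2) → ℕ
  | leaf _, _ => 0
  | node k c, z => blockCost e i (c (z k)) z + if (e k).1 = i then 1 else 0

theorem sum_blockCost [Fintype ι] (T : DTree κ (fun _ => 2) L) (z : Input κ fun _ => 2) :
    ∑ i, T.blockCost e i z = T.cost z := by
  induction T with
  | leaf l => simp [blockCost, cost]
  | node k c ih => simp [blockCost, cost, Finset.sum_add_distrib, ih]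

theorem card_mul_card_hit_le (j : ι → Fin m) (i : ι) (x : Input ι fun _ => 2)
    (T : DTree κ (fun _ => 2) L) (A : Finset (Fin m)) :
    A.card * (A.filter fun a => i ∈ (T.unplant e b (Function.update j i a)).queried x).card ≤
      2 * ∑ a ∈ A, T.blockCost e i (plant e b (Function.update j i a) x) := by
  induction T generalizing A with
  | leaf l => simp [unplant, queried]
  | node k c ih =>
    by_cases hk : (e k).1 = i
    · have hne : ∀ a, (e k).2 ≠ a →
          plant e b (Function.update j i a) x k = b ∧
          (node k c).unplant e b (Function.update j i a) =
            (c b).unplant e b (Function.update j i a) := fun a ha => by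
        simp [plant, unplant, hk, ha]
      have hcost : ∀ a, (e k).2 ≠ a →
          (node k c).blockCost e i (plant e b (Function.update j i a) x) =
            (c b).blockCost e i (plant e b (Function.update j i a) x) + 1 := fun a ha => by
        simp [blockCost, (hne a ha).1, hk]
      set B := A.erase (e k).2 with hB
      have hBne : ∀ a ∈ B, (e k).2 ≠ a := fun a ha => (Finset.ne_of_mem_erase ha).symm
      have hfil : B.filter (fun a => i ∈
            ((node k c).unplant e b (Function.update j i a)).queried x) =
          B.filter fun a => i ∈ ((c b).unplant e b (Function.update j i a)).queried x :=
        Finset.filter_congr fun a ha => by rw [(hne a (hBne a ha)).2]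
      have hsum : ∑ a ∈ B, (node k c).blockCost e i (plant e b (Function.update j i a) x) =
          ∑ a ∈ B, (c b).blockCost e i (plant e b (Function.update j i a) x) + B.card := by
        rw [Finset.sum_congr rfl fun a ha => hcost a (hBne a ha)]
        simp [Finset.sum_add_distrib]
      have hB_ih := ih b B
      by_cases hA : (e k).2 ∈ A
      · have hAB : A = insert (e k).2 B := (Finset.insert_erase hA).symm
        have hnot : (e k).2 ∉ B := Finset.notMem_erase _ _
        have h1 : 1 ≤ (node k c).blockCost e i
            (plant e b (Function.update j i (e k).2) x) := by
          simp [blockCost, hk]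
        have hle := Finset.card_filter_le B
          fun a => i ∈ ((c b).unplant e b (Function.update j i a)).queried x
        have hins : ((insert (e k).2 B).filter (fun a => i ∈
            ((node k c).unplant e b (Function.update j i a)).queried x)).card ≤
            (B.filter fun a => i ∈
              ((c b).unplant e b (Function.update j i a)).queried x).card + 1 := by
          rw [Finset.filter_insert, ← hfil]
          split
          · exact Finset.card_insert_le _ _
          · exact Nat.le_succ _
        rw [hAB, Finset.card_insert_of_notMem hnot, Finset.sum_insert hnot, hsum]
        refine (Nat.mul_le_mul_left _ hins).trans ?_
        nlinarith
      · have hAB : B = A := Finset.erase_eq_of_notMem hA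
        rw [← hAB, hfil, hsum]
        omega
    · have hik : i ≠ (e k).1 := Ne.symm hk
      have hpl : ∀ a, plant e b (Function.update j i a) x k = plant e b j x k := fun a => by
        simp [plant, Function.update_of_ne hk]
      have hcost : ∀ a, (node k c).blockCost e i (plant e b (Function.update j i a) x) =
          (c (plant e b j x k)).blockCost e i (plant e b (Function.update j i a) x) :=
        fun a => by simp [blockCost, hpl, hk]
      have hq : ∀ a, i ∈ ((node k c).unplant e b (Function.update j i a)).queried x ↔
          i ∈ ((c (plant e b j x k)).unplant e b (Function.update j i a)).queried x := by
        intro a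
        by_cases h : (e k).2 = j (e k).1
        · simp [unplant, Function.update_of_ne hk, h, queried, hik, plant]
        · simp [unplant, Function.update_of_ne hk, h, plant]
      simp only [hcost, hq]
      exact ih _ A

variable [Fintype ι]

theorem sum_sum_update (F : (ι → Fin m) → ℕ) (i : ι) :
    ∑ j : ι → Fin m, ∑ a, F (Function.update j i a) = m * ∑ j, F j := by
  rw [← Fintype.sum_prod_type']
  let φ : (ι → Fin m) × Fin m → (ι → Fin m) × Fin m :=
    fun p => (Function.update p.1 i p.2, p.1 i)
  have hφ : Function.Involutive φ := fun p => by simp [φ]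
  rw [Fintype.sum_equiv hφ.toPerm (fun p => F (Function.update p.1 i p.2)) (fun p => F p.1)
    fun p => rfl, Fintype.sum_prod_type]
  simp [Finset.mul_sum]

theorem mul_sum_card_queried_le (T : DTree κ (fun _ => 2) L) (x : Input ι fun _ => 2) {d : ℕ}
    (hd : T.depth ≤ d) :
    m * ∑ j : ι → Fin m, ((T.unplant e b j).queried x).card ≤
      2 * (d * Fintype.card (ι → Fin m)) := by
  rcases Nat.eq_zero_or_pos m with hm | hm
  · simp [hm]
  have hi : ∀ i : ι,
      m * ∑ j : ι → Fin m, (if i ∈ (T.unplant e b j).queried x then 1 else 0) ≤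
        2 * ∑ j : ι → Fin m, T.blockCost e i (plant e b j x) := by
    intro i
    refine Nat.le_of_mul_le_mul_left ?_ hm
    calc m * (m * ∑ j : ι → Fin m, (if i ∈ (T.unplant e b j).queried x then 1 else 0))
        = ∑ j : ι → Fin m, m * ∑ a,
            (if i ∈ (T.unplant e b (Function.update j i a)).queried x then 1 else 0) := by
          rw [← sum_sum_update (i := i), Finset.mul_sum]
      _ ≤ ∑ j : ι → Fin m, 2 * ∑ a, T.blockCost e i (plant e b (Function.update j i a) x) := by
          refine Finset.sum_le_sum fun j _ => ?_
          have := card_mul_card_hit_le e b j i x T Finset.univ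
          rwa [Finset.card_univ, Fintype.card_fin, Finset.card_filter] at this
      _ = m * (2 * ∑ j : ι → Fin m, T.blockCost e i (plant e b j x)) := by
          rw [← Finset.mul_sum, sum_sum_update (fun j => T.blockCost e i (plant e b j x))]
          ring
  calc m * ∑ j : ι → Fin m, ((T.unplant e b j).queried x).card
      = ∑ i, m * ∑ j : ι → Fin m, (if i ∈ (T.unplant e b j).queried x then 1 else 0) := by
        rw [← Finset.mul_sum, Finset.sum_comm]
        simp
    _ ≤ ∑ i, 2 * ∑ j : ι → Fin m, T.blockCost e i (plant e b j x) :=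
        Finset.sum_le_sum fun i _ => hi i
    _ = 2 * ∑ j : ι → Fin m, T.cost (plant e b j x) := by
        rw [← Finset.mul_sum, Finset.sum_comm]
        simp [sum_blockCost]
    _ ≤ 2 * (d * Fintype.card (ι → Fin m)) := by
        refine Nat.mul_le_mul_left _ ?_
        calc ∑ j : ι → Fin m, T.cost (plant e b j x) ≤ ∑ _j : ι → Fin m, d :=
              Finset.sum_le_sum fun j _ => (T.cost_le_depth _).trans hd
          _ = d * Fintype.card (ι → Fin m) := by
              rw [Finset.sum_const, Finset.card_univ, smul_eq_mul, mul_comm]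

theorem card_queried_gt_le (hm : 0 < m) (T : DTree κ (fun _ => 2) L) (x : Input ι fun _ => 2)
    {d : ℕ} (hd : T.depth ≤ d) :
    25 * (Finset.univ.filter fun j : ι → Fin m =>
      50 * d / m < ((T.unplant e b j).queried x).card).card ≤ Fintype.card (ι → Fin m) := by
  set t := 50 * d / m with ht
  set N := Fintype.card (ι → Fin m)
  set Bad := Finset.univ.filter fun j : ι → Fin m => t < ((T.unplant e b j).queried x).card
  have hsum := mul_sum_card_queried_le e b T x hd
  have hbad : Bad.card * (t + 1) ≤ ∑ j : ι → Fin m, ((T.unplant e b j).queried x).card := by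
    calc Bad.card * (t + 1) = ∑ _j ∈ Bad, (t + 1) := by simp
      _ ≤ ∑ j ∈ Bad, ((T.unplant e b j).queried x).card :=
          Finset.sum_le_sum fun j hj => (Finset.mem_filter.1 hj).2
      _ ≤ _ := Finset.sum_le_sum_of_subset (Finset.subset_univ _)
  have htm : 50 * d < m * (t + 1) := Nat.lt_mul_div_succ _ hm
  have hle : Bad.card * (m * (t + 1)) ≤ 2 * (d * N) := by nlinarith
  rcases Nat.eq_zero_or_pos d with rfl | hd0
  · have : Bad.card * (m * (t + 1)) = 0 := by omega
    have : Bad.card = 0 := by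
      rcases Nat.mul_eq_zero.1 this with h | h
      · exact h
      · omega
    omega
  · have h1 : Bad.card * (50 * d) ≤ 2 * (d * N) :=
      (Nat.mul_le_mul_left _ htm.le).trans hle
    refine le_of_mul_le_mul_left (a := 2 * d) ?_ (by omega)
    nlinarith

end Planting

end DTree

section Probability

theorem toOuterMeasure_add_compl {A : Type} (μ : PMF A) (G : Set A) :
    μ.toOuterMeasure G + μ.toOuterMeasure Gᶜ = 1 := by
  rw [PMF.toOuterMeasure_apply, PMF.toOuterMeasure_apply, ← ENNReal.tsum_add, ← μ.tsum_coe]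
  exact tsum_congr fun a => congrFun (Set.indicator_self_add_compl G μ) a

theorem toOuterMeasure_bind_le {A B : Type} (μ : PMF A) (F : A → PMF B) (s : Set B) (G : Set A)
    {u v : ℝ≥0∞} (hu : ∀ a ∈ G, (F a).toOuterMeasure s ≤ u)
    (hv : ∀ a ∉ G, (F a).toOuterMeasure s ≤ v) :
    (μ.bind F).toOuterMeasure s ≤ μ.toOuterMeasure G * u + μ.toOuterMeasure Gᶜ * v := by
  classical
  rw [PMF.toOuterMeasure_bind_apply, PMF.toOuterMeasure_apply, PMF.toOuterMeasure_apply,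
    ← ENNReal.tsum_mul_right, ← ENNReal.tsum_mul_right, ← ENNReal.tsum_add]
  refine ENNReal.tsum_le_tsum fun a => ?_
  by_cases ha : a ∈ G
  · simpa [ha] using mul_le_mul_right (hu a ha) (μ a)
  · simpa [ha] using mul_le_mul_right (hv a ha) (μ a)

theorem majority_failure_bound {p q : ℝ≥0∞} (h : q + p = 1) (hq : q ≤ 1 / 3 + 1 / 25) :
    q * (q * 1 + p * q) + p * (q * q + p * 0) ≤ 1 / 3 := by
  have hp1 : p ≠ ⊤ := fun hp => by simp [hp] at h
  have hq1 : q ≠ ⊤ := fun hq => by simp [hq] at h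
  lift p to NNReal using hp1
  lift q to NNReal using hq1
  have h' : (q : ℝ) + p = 1 := by exact_mod_cast h
  have hc : (1 / 3 + 1 / 25 : ℝ≥0∞) = ((28 / 75 : NNReal) : ℝ≥0∞) := by
    rw [show (28 / 75 : NNReal) = 3⁻¹ + 25⁻¹ by ext; push_cast; norm_num, ENNReal.coe_add,
      ENNReal.coe_inv (by norm_num), ENNReal.coe_inv (by norm_num)]
    simp
  have hc' : (1 / 3 : ℝ≥0∞) = ((1 / 3 : NNReal) : ℝ≥0∞) := by
    simp
  rw [hc] at hq
  rw [hc']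
  have hq' : (q : ℝ) ≤ 28 / 75 := by exact_mod_cast hq
  have hq0 : (0 : ℝ) ≤ q := q.2
  norm_cast
  rw [← NNReal.coe_le_coe]
  push_cast
  have hp : (p : ℝ) = 1 - q := by linarith
  rw [hp]
  nlinarith [mul_nonneg hq0 hq0, mul_nonneg hq0 (sub_nonneg.2 hq'),
    mul_nonneg (mul_nonneg hq0 hq0) (sub_nonneg.2 hq')]

variable {ι : Type} {α : ι → ℕ}

theorem exists_majority (ν : PMF (DTree ι α (Option Bool))) {t : ℕ}
    (ht : ∀ T ∈ ν.support, T.depth ≤ t) :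
    ∃ ρ : PMF (DTree ι α (Option Bool)), (∀ T ∈ ρ.support, T.depth ≤ 3 * t) ∧
      ∀ x b, ν.toOuterMeasure {T | T.eval x ≠ some b} ≤ 1 / 3 + 1 / 25 →
        2 / 3 ≤ ρ.toOuterMeasure {T | T.eval x = some b} := by
  refine ⟨ν.bind fun T₁ => ν.bind fun T₂ => ν.map fun T₃ => T₁.andThen fun a =>
    T₂.andThen fun b => T₃.andThen fun c => .leaf (if a = b then a else c), ?_, ?_⟩
  · intro T hT
    simp only [PMF.mem_support_bind_iff, PMF.mem_support_map_iff] at hT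
    obtain ⟨T₁, h₁, T₂, h₂, T₃, h₃, rfl⟩ := hT
    rw [show 3 * t = t + (t + (t + 0)) by ring]
    exact DTree.depth_andThen_le _ _ (ht _ h₁) fun a => DTree.depth_andThen_le _ _ (ht _ h₂)
      fun b => DTree.depth_andThen_le _ _ (ht _ h₃) fun c => by simp [DTree.depth]
  · intro x b hb
    set G : Set (DTree ι α (Option Bool)) := {T | T.eval x ≠ some b} with hG
    set ρ := ν.bind fun T₁ => ν.bind fun T₂ => ν.map fun T₃ => T₁.andThen fun a =>
      T₂.andThen fun b => T₃.andThen fun c => DTree.leaf (α := α) (if a = b then a else c)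
    have hfail : ρ.toOuterMeasure G ≤ 1 / 3 := by
      refine le_trans ?_ (majority_failure_bound (toOuterMeasure_add_compl ν G) hb)
      refine toOuterMeasure_bind_le ν _ G G (fun T₁ h₁ => ?_) (fun T₁ h₁ => ?_)
      · refine toOuterMeasure_bind_le ν _ G G (fun T₂ h₂ => ?_) (fun T₂ h₂ => ?_)
        · rw [← toOuterMeasure_add_compl (ν.map _) G]
          exact le_self_add
        · rw [PMF.toOuterMeasure_map_apply]
          refine MeasureTheory.measure_mono fun T₃ h₃ => ?_
          simp only [hG, Set.mem_ofPred_eq, not_not] at h₁ h₂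
          simpa [hG, DTree.eval_andThen, DTree.eval, h₂, h₁] using h₃
      · refine toOuterMeasure_bind_le ν _ G G (fun T₂ h₂ => ?_) (fun T₂ h₂ => ?_)
        · rw [PMF.toOuterMeasure_map_apply]
          refine MeasureTheory.measure_mono fun T₃ h₃ => ?_
          simp only [hG, Set.mem_ofPred_eq, not_not] at h₁ h₂
          simpa [hG, DTree.eval_andThen, DTree.eval, h₁, Ne.symm h₂] using h₃
        · rw [PMF.toOuterMeasure_map_apply]
          refine (MeasureTheory.measure_mono fun T₃ h₃ => ?_).trans
            (MeasureTheory.measure_empty (μ := ν.toOuterMeasure)).le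
          simp only [hG, Set.mem_ofPred_eq, not_not] at h₁ h₂
          simp [hG, DTree.eval_andThen, DTree.eval, h₁, h₂] at h₃
    have hGc : {T : DTree ι α (Option Bool) | T.eval x = some b} = Gᶜ := by
      ext T
      simp [hG]
    rw [hGc]
    have h := toOuterMeasure_add_compl ρ G
    have h13 : (1 / 3 : ℝ≥0∞) + 2 / 3 = 1 := by
      rw [ENNReal.div_add_div_same, show (1 + 2 : ℝ≥0∞) = 3 by norm_num,
        ENNReal.div_self (by norm_num) (by norm_num)]
    refine (ENNReal.add_le_add_iff_left (a := 1 / 3) (by finiteness)).1 ?_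
    exact (h13.trans h.symm).trans_le (add_le_add hfail le_rfl)

theorem exists_retry (ν : PMF (DTree ι α (Option Bool))) {t : ℕ}
    (ht : ∀ T ∈ ν.support, T.depth ≤ t) :
    ∃ ρ : PMF (DTree ι α (Option Bool)), (∀ T ∈ ρ.support, T.depth ≤ 3 * t) ∧
      (∀ x b, (∀ T ∈ ν.support, T.eval x = some b ∨ T.eval x = none) →
        ∀ T ∈ ρ.support, T.eval x = some b ∨ T.eval x = none) ∧
      ∀ x, ν.toOuterMeasure {T | T.eval x = none} ≤ 1 / 2 + 1 / 25 →
        ρ.toOuterMeasure {T | T.eval x = none} ≤ 1 / 2 := by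
  refine ⟨ν.bind fun T₁ => ν.map fun T₂ => T₁.andThen fun a =>
    if a = none then T₂ else .leaf a, ?_, ?_, ?_⟩
  · intro T hT
    simp only [PMF.mem_support_bind_iff, PMF.mem_support_map_iff] at hT
    obtain ⟨T₁, h₁, T₂, h₂, rfl⟩ := hT
    refine (DTree.depth_andThen_le _ _ (t := t) (ht _ h₁) fun a => ?_).trans (by omega)
    split
    · exact ht _ h₂
    · simp [DTree.depth]
  · intro x b hb T hT
    simp only [PMF.mem_support_bind_iff, PMF.mem_support_map_iff] at hT
    obtain ⟨T₁, h₁, T₂, h₂, rfl⟩ := hT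
    rw [DTree.eval_andThen]
    rcases hb T₁ h₁ with h | h
    · simp [h, DTree.eval]
    · simpa [h] using hb T₂ h₂
  · intro x hx
    set G : Set (DTree ι α (Option Bool)) := {T | T.eval x = none} with hG
    refine (toOuterMeasure_bind_le ν _ G G (u := ν.toOuterMeasure G) (v := 0)
      (fun T₁ h₁ => ?_) (fun T₁ h₁ => ?_)).trans ?_
    · rw [PMF.toOuterMeasure_map_apply]
      refine MeasureTheory.measure_mono fun T₂ h₂ => ?_
      simp only [hG, Set.mem_ofPred_eq] at h₁
      simpa [hG, DTree.eval_andThen, h₁] using h₂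
    · rw [PMF.toOuterMeasure_map_apply]
      refine (MeasureTheory.measure_mono fun T₂ h₂ => ?_).trans
        (MeasureTheory.measure_empty (μ := ν.toOuterMeasure)).le
      simp only [hG, Set.mem_ofPred_eq] at h₁
      simp [hG, DTree.eval_andThen, DTree.eval, h₁] at h₂
    · rw [mul_zero, add_zero]
      refine (mul_le_mul' hx hx).trans ?_
      have hc : (1 / 2 + 1 / 25 : ℝ≥0∞) = ((1 / 2 + 1 / 25 : NNReal) : ℝ≥0∞) := by simp
      have hc' : (1 / 2 : ℝ≥0∞) = ((1 / 2 : NNReal) : ℝ≥0∞) := by simp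
      rw [hc, hc', ← ENNReal.coe_mul, ENNReal.coe_le_coe, ← NNReal.coe_le_coe]
      push_cast
      norm_num

variable {κ : Type} [Fintype ι] [DecidableEq ι] {m : ℕ}

theorem uniform_queried_gt_le [Nonempty (ι → Fin m)] (e : κ → ι × Fin m) (b : Fin 2) (hm : 0 < m)
    {L : Type} (T : DTree κ (fun _ => 2) L) (x : Input ι fun _ => 2) {d : ℕ} (hd : T.depth ≤ d) :
    (PMF.uniformOfFintype (ι → Fin m)).toOuterMeasure
      {j | 50 * d / m < ((T.unplant e b j).queried x).card} ≤ 1 / 25 := by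
  classical
  have h := DTree.card_queried_gt_le e b hm T x hd
  rw [PMF.toOuterMeasure_uniformOfFintype_apply, Fintype.card_subtype,
    ENNReal.div_le_iff
      (Nat.cast_ne_zero.2 Fintype.card_ne_zero) (by finiteness), one_div,
    ← ENNReal.div_eq_inv_mul, ENNReal.le_div_iff_mul_le (by simp) (by simp), mul_comm]
  simp only [Set.mem_ofPred_eq]
  exact_mod_cast h

theorem exists_unplanted (e : κ → ι × Fin m) (b : Fin 2) (hm : 0 < m)
    (μ : PMF (DTree κ (fun _ => 2) (Option Bool))) {d : ℕ} (hd : ∀ T ∈ μ.support, T.depth ≤ d) :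
    ∃ ν : PMF (DTree ι (fun _ => 2) (Option Bool)),
      (∀ T ∈ ν.support, T.depth ≤ 50 * d / m) ∧
      (∀ T ∈ ν.support, ∃ S ∈ μ.support, ∃ j, ∀ x,
        T.eval x = S.eval (DTree.plant e b j x) ∨ T.eval x = none) ∧
      ∀ (x : Input ι fun _ => 2) (V : Set (Option Bool)) (p : ℝ≥0∞),
        (∀ j, μ.toOuterMeasure {T | T.eval (DTree.plant e b j x) ∈ V} ≤ p) →
          ν.toOuterMeasure {T | T.eval x ∈ V} ≤ p + 1 / 25 := by
  classical
  have : Nonempty (ι → Fin m) := ⟨fun _ => ⟨0, hm⟩⟩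
  set U := PMF.uniformOfFintype (ι → Fin m)
  have heval : ∀ (T : DTree κ (fun _ => 2) (Option Bool)) (j : ι → Fin m) x,
      ((T.unplant e b j).dedup fun _ => none).eval x = T.eval (DTree.plant e b j x) :=
    fun T j x => by rw [DTree.eval_dedup _ _ _ (by simp), DTree.eval_unplant]
  refine ⟨μ.bind fun T => U.map fun j =>
    DTree.trunc none ((T.unplant e b j).dedup fun _ => none) (50 * d / m), ?_, ?_, ?_⟩
  · intro T hT
    simp only [PMF.mem_support_bind_iff, PMF.mem_support_map_iff] at hT
    obtain ⟨T₁, h₁, j, hj, rfl⟩ := hT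
    exact DTree.depth_trunc_le _ _ _
  · intro T hT
    simp only [PMF.mem_support_bind_iff, PMF.mem_support_map_iff] at hT
    obtain ⟨T₁, h₁, j, hj, rfl⟩ := hT
    refine ⟨T₁, h₁, j, fun x => ?_⟩
    rw [← heval]
    exact DTree.eval_trunc_eq_or _ _ _ _
  · intro x V p hp
    rw [PMF.toOuterMeasure_bind_apply]
    have hT : ∀ T, μ T * (U.map fun j => DTree.trunc none
          ((T.unplant e b j).dedup fun _ => none) (50 * d / m)).toOuterMeasure
            {T | T.eval x ∈ V} ≤
        (∑' j, μ T * {j | T.eval (DTree.plant e b j x) ∈ V}.indicator U j) + μ T * (1 / 25) := by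
      intro T
      by_cases hμ : μ T = 0
      · simp [hμ]
      rw [ENNReal.tsum_mul_left, ← PMF.toOuterMeasure_apply, ← mul_add]
      refine mul_le_mul_right ?_ _
      rw [PMF.toOuterMeasure_map_apply]
      refine le_trans (le_trans (MeasureTheory.measure_mono ?_)
        (MeasureTheory.measure_union_le {j | T.eval (DTree.plant e b j x) ∈ V}
          {j | 50 * d / m < ((T.unplant e b j).queried x).card}))
        (add_le_add le_rfl
          (uniform_queried_gt_le e b hm T x (hd T ((μ.mem_support_iff T).2 hμ))))
      intro j hj
      by_cases hc : 50 * d / m < ((T.unplant e b j).queried x).card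
      · exact Or.inr hc
      · left
        have hcost := DTree.cost_dedup_le (T.unplant e b j) (fun _ => none) x (by simp)
        simp only [Finset.filter_true] at hcost
        rw [Set.mem_preimage, Set.mem_ofPred_eq,
          DTree.eval_trunc_of_cost_le _ _ _ _ (hcost.trans (not_lt.1 hc)), heval] at hj
        exact hj
    refine (ENNReal.tsum_le_tsum hT).trans ?_
    rw [ENNReal.tsum_add, ENNReal.tsum_mul_right, μ.tsum_coe, one_mul, ENNReal.tsum_comm]
    gcongr
    calc ∑' j, ∑' T, μ T * {j | T.eval (DTree.plant e b j x) ∈ V}.indicator U j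
        = ∑' j, U j * μ.toOuterMeasure {T | T.eval (DTree.plant e b j x) ∈ V} := by
          refine tsum_congr fun j => ?_
          rw [PMF.toOuterMeasure_apply, ← ENNReal.tsum_mul_left]
          refine tsum_congr fun T => ?_
          by_cases h : T.eval (DTree.plant e b j x) ∈ V <;> simp [h, mul_comm]
      _ ≤ ∑' j, U j * p := ENNReal.tsum_le_tsum fun j => mul_le_mul_right (hp j) _
      _ = p := by rw [ENNReal.tsum_mul_right, U.tsum_coe, one_mul]

end Probability

section Complexity

variable {κ : Type} [Fintype κ]

theorem exists_dtree_eval_eq {L : Type} (F : Input κ (fun _ => 2) → L) :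
    ∃ T : DTree κ (fun _ => 2) L, ∀ x, T.eval x = F x := by
  classical
  suffices h : ∀ (s : Finset κ) (F : Input κ (fun _ => 2) → L),
      (∀ x y, (∀ k ∈ s, x k = y k) → F x = F y) →
        ∃ T : DTree κ (fun _ => 2) L, ∀ x, T.eval x = F x from
    h Finset.univ F fun x y hxy => congrArg F (funext fun k => hxy k (Finset.mem_univ k))
  intro s
  induction s using Finset.induction_on with
  | empty => exact fun F hF => ⟨.leaf (F fun _ => 0), fun x => hF _ _ (by simp)⟩
  | insert k s hk ih =>
    intro F hF
    have : ∀ a : Fin 2, ∃ T : DTree κ (fun _ => 2) L,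
        ∀ x, T.eval x = F (Function.update x k a) := fun a => by
      refine ih (fun x => F (Function.update x k a)) fun x y hxy => hF _ _ fun k' hk' => ?_
      by_cases h : k' = k
      · subst h
        simp
      · rw [Function.update_of_ne h, Function.update_of_ne h]
        exact hxy k' ((Finset.mem_insert.1 hk').resolve_left h)
    choose T hT using this
    refine ⟨.node k T, fun x => ?_⟩
    rw [DTree.eval, hT, Function.update_eq_self]

theorem Rq_spec (g : PartialFn κ fun _ => 2) :
    ∃ μ : PMF (DTree κ (fun _ => 2) (Option Bool)), (∀ T ∈ μ.support, T.depth ≤ Rq g) ∧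
      ∀ x b, g x = some b → 2 / 3 ≤ μ.toOuterMeasure {T | T.eval x = some b} := by
  refine Nat.sInf_mem (s := {d | ∃ μ : PMF (DTree κ (fun _ => 2) (Option Bool)),
    (∀ T ∈ μ.support, T.depth ≤ d) ∧
    ∀ x b, g x = some b → 2 / 3 ≤ μ.toOuterMeasure {T | T.eval x = some b}}) ?_
  obtain ⟨T, hT⟩ := exists_dtree_eval_eq g
  refine ⟨T.depth, PMF.pure T, by simp, fun x b hb => ?_⟩
  have h23 : (2 / 3 : ℝ≥0∞) ≤ 1 := ENNReal.div_le_of_le_mul (by norm_num)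
  simpa [PMF.toOuterMeasure_pure_apply, hT, hb] using h23

theorem R0q_spec (g : PartialFn κ fun _ => 2) :
    ∃ μ : PMF (DTree κ (fun _ => 2) (Option Bool)), (∀ T ∈ μ.support, T.depth ≤ R0q g) ∧
      (∀ T ∈ μ.support, ∀ x b, g x = some b → T.eval x = some b ∨ T.eval x = none) ∧
      ∀ x b, g x = some b → μ.toOuterMeasure {T | T.eval x = none} ≤ 1 / 2 := by
  refine Nat.sInf_mem (s := {d | ∃ μ : PMF (DTree κ (fun _ => 2) (Option Bool)),
    (∀ T ∈ μ.support, T.depth ≤ d) ∧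
    (∀ T ∈ μ.support, ∀ x b, g x = some b → T.eval x = some b ∨ T.eval x = none) ∧
    ∀ x b, g x = some b → μ.toOuterMeasure {T | T.eval x = none} ≤ 1 / 2}) ?_
  obtain ⟨T, hT⟩ := exists_dtree_eval_eq g
  refine ⟨T.depth, PMF.pure T, by simp, ?_, fun x b hb => ?_⟩
  · intro S hS x b hb
    rw [PMF.support_pure, Set.mem_singleton_iff] at hS
    exact Or.inl (by rw [hS, hT, hb])
  · simp [PMF.toOuterMeasure_pure_apply, hT, hb]

variable {ι : Type} [Fintype ι] [DecidableEq ι] {m : ℕ}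
  {f : PartialFn ι fun _ => 2} {g : PartialFn κ fun _ => 2}

theorem mul_Rq_le (e : κ → ι × Fin m) (b : Fin 2)
    (h : ∀ j x, g (DTree.plant e b j x) = f x) : m * Rq f ≤ 150 * Rq g := by
  rcases Nat.eq_zero_or_pos m with rfl | hm
  · simp
  obtain ⟨μ, hd, hμ⟩ := Rq_spec g
  obtain ⟨ν, hνd, -, hν⟩ := exists_unplanted e b hm μ hd
  obtain ⟨ρ, hρd, hρ⟩ := exists_majority ν hνd
  have hle : Rq f ≤ 3 * (50 * Rq g / m) := by
    refine Nat.sInf_le ⟨ρ, hρd, fun x v hv => hρ x v (hν x {some v}ᶜ (1 / 3) fun j => ?_)⟩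
    have h23 := hμ _ v ((h j x).trans hv)
    have hc := toOuterMeasure_add_compl μ {T | T.eval (DTree.plant e b j x) = some v}
    have h13 : (2 / 3 : ℝ≥0∞) + 1 / 3 = 1 := by
      rw [ENNReal.div_add_div_same, show (2 + 1 : ℝ≥0∞) = 3 by norm_num,
        ENNReal.div_self (by norm_num) (by norm_num)]
    refine (ENNReal.add_le_add_iff_left (a := 2 / 3) (by finiteness)).1 ?_
    exact (add_le_add h23 le_rfl).trans (hc.trans h13.symm).le
  have := Nat.mul_div_le (50 * Rq g) m
  nlinarith

theorem mul_R0q_le (e : κ → ι × Fin m) (b : Fin 2)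
    (h : ∀ j x, g (DTree.plant e b j x) = f x) : m * R0q f ≤ 150 * R0q g := by
  rcases Nat.eq_zero_or_pos m with rfl | hm
  · simp
  obtain ⟨μ, hd, hzero, hμ⟩ := R0q_spec g
  obtain ⟨ν, hνd, hνe, hν⟩ := exists_unplanted e b hm μ hd
  obtain ⟨ρ, hρd, hρe, hρ⟩ := exists_retry ν hνd
  have hle : R0q f ≤ 3 * (50 * R0q g / m) := by
    refine Nat.sInf_le ⟨ρ, hρd, fun T hT x v hv => hρe x v (fun S hS => ?_) T hT,
      fun x v hv => hρ x (hν x {none} (1 / 2) fun j => hμ _ v ((h j x).trans hv))⟩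
    obtain ⟨S', hS', j, hj⟩ := hνe S hS
    rcases hj x with hj | hj
    · rw [hj]
      exact hzero S' hS' _ v ((h j x).trans hv)
    · exact Or.inr hj
  have := Nat.mul_div_le (50 * R0q g) m
  nlinarith

end Complexity

section OrAnd

theorem orFn_single {m : ℕ} (j : Fin m) (v : Fin 2) :
    orFn m (fun k => if k = j then v else 0) = v := by
  unfold orFn
  fin_cases v <;> simp

theorem andFn_single {m : ℕ} (j : Fin m) (v : Fin 2) :
    andFn m (fun k => if k = j then v else 1) = v := by
  unfold andFn
  fin_cases v <;> simp

/-- The composition `f ∘ AND_m`. -/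
def composeAnd {n : ℕ} (f : PartialFn (Fin n) fun _ => 2) (m : ℕ) :
    PartialFn (Fin n × Fin m) (fun _ => 2) :=
  fun z => f fun i => andFn m fun j => z (i, j)

variable {n m : ℕ} (f : PartialFn (Fin n) fun _ => 2)

theorem composeOr_plant (j : Fin n → Fin m) (x : Input (Fin n) fun _ => 2) :
    composeOr f m (DTree.plant id 0 j x) = f x := by
  simp only [composeOr, DTree.plant, id, orFn_single]

theorem composeAnd_plant (j : Fin n → Fin m) (x : Input (Fin n) fun _ => 2) :
    composeAnd f m (DTree.plant id 1 j x) = f x := by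
  simp only [composeAnd, DTree.plant, id, andFn_single]

theorem composeAndOr_plant (j : Fin n × Fin m → Fin m) (x : Input (Fin n × Fin m) fun _ => 2) :
    composeAndOr f m (DTree.plant (fun k => ((k.1, k.2.1), k.2.2)) 0 j x) =
      composeAnd f m x := by
  simp only [composeAndOr, composeAnd, DTree.plant, orFn_single]

end OrAnd

end QC

/-- Randomized query complexity composes with `OR_m` (and with
`AND_m ∘ OR_m`): `R(f ∘ OR_m) = Ω(m·R(f))`, `R₀(f ∘ OR_m) = Ω(m·R₀(f))`,
`R(f ∘ AND_m ∘ OR_m) = Ω(m²·R(f))`, `R₀(f ∘ AND_m ∘ OR_m) = Ω(m²·R₀(f))`,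
with absolute hidden constants. -/
theorem randomized_composition_with_or :
    ∃ c : ℝ, 0 < c ∧ ∀ (n m : ℕ) (f : QC.PartialFn (Fin n) fun _ => 2),
      c * ((m : ℝ) * (QC.Rq f : ℝ)) ≤ (QC.Rq (QC.composeOr f m) : ℝ) ∧
      c * ((m : ℝ) * (QC.R0q f : ℝ)) ≤ (QC.R0q (QC.composeOr f m) : ℝ) ∧
      c * ((m : ℝ) ^ 2 * (QC.Rq f : ℝ)) ≤ (QC.Rq (QC.composeAndOr f m) : ℝ) ∧
      c * ((m : ℝ) ^ 2 * (QC.R0q f : ℝ)) ≤ (QC.R0q (QC.composeAndOr f m) : ℝ) := by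
  refine ⟨1 / 22500, by norm_num, fun n m f => ?_⟩
  have hR := QC.mul_Rq_le _ _ (QC.composeOr_plant (m := m) f)
  have hR0 := QC.mul_R0q_le _ _ (QC.composeOr_plant (m := m) f)
  have hA := QC.mul_Rq_le _ _ (QC.composeAnd_plant (m := m) f)
  have hA0 := QC.mul_R0q_le _ _ (QC.composeAnd_plant (m := m) f)
  have hAO := QC.mul_Rq_le _ _ (QC.composeAndOr_plant (m := m) f)
  have hAO0 := QC.mul_R0q_le _ _ (QC.composeAndOr_plant (m := m) f)
  have square : ∀ {r s t : ℕ}, m * r ≤ 150 * s → m * s ≤ 150 * t →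
      m ^ 2 * r ≤ 22500 * t := fun {r s t} h₁ h₂ => by
    nlinarith [Nat.mul_le_mul_left m h₁]
  have scale : ∀ {r s : ℕ}, r ≤ 22500 * s → (1 / 22500 : ℝ) * r ≤ s := fun {r s} h => by
    have : (r : ℝ) ≤ 22500 * s := by exact_mod_cast h
    linarith
  refine ⟨?_, ?_, ?_, ?_⟩
  · exact_mod_cast scale (hR.trans (by omega))
  · exact_mod_cast scale (hR0.trans (by omega))
  · exact_mod_cast scale (square hA hAO)
  · exact_mod_cast scale (square hA0 hAO0)
end

section
/- Let f : D → {0,1} be a partial function with D ⊆ [M]^n, and let f_CS be the cheat sheet version of f built from a certifying function for f with c = 10·log₂ n copies of f. Then R(f_CS) = Ω(R(f)/c) = Ω̃(R(f)). -/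
open scoped BigOperators ENNReal

namespace QC

section Trees

variable {ι : Type} {α : ι → ℕ} {L L' : Type}

/-- `F` is computed by a decision tree of depth at most `d`. -/
def Computes (d : ℕ) (F : Input ι α → L) : Prop :=
  ∃ T : DTree ι α L, T.depth ≤ d ∧ ∀ x, T.eval x = F x

namespace Computes

lemma const (d : ℕ) (b : L) : Computes d (fun _ : Input ι α => b) :=
  ⟨.leaf b, Nat.zero_le _, fun _ => rfl⟩

lemma mono {d e : ℕ} (hde : d ≤ e) {F : Input ι α → L} : Computes d F → Computes e F :=
  fun ⟨T, hT, h⟩ => ⟨T, hT.trans hde, h⟩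

lemma query {d : ℕ} (i : ι) {G : Fin (α i) → Input ι α → L} (h : ∀ a, Computes d (G a)) :
    Computes (d + 1) (fun x => G (x i) x) := by
  choose T hT hT' using h
  refine ⟨.node i T, ?_, fun x => hT' _ _⟩
  simp only [DTree.depth]
  exact Nat.add_le_add_right (Finset.sup_le fun a _ => hT a) 1

lemma bind {d e : ℕ} {F : Input ι α → L} {G : L → Input ι α → L'} (hF : Computes d F)
    (hG : ∀ a, Computes e (G a)) : Computes (d + e) (fun x => G (F x) x) := by
  obtain ⟨T, hT, hTF⟩ := hF
  obtain rfl : T.eval = F := funext hTF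
  clear hTF
  induction T generalizing d with
  | leaf b => exact (hG b).mono (Nat.le_add_left _ _)
  | node i child ih =>
    simp only [DTree.depth] at hT
    obtain ⟨d, rfl⟩ : ∃ d', d = d' + 1 := ⟨d - 1, by omega⟩
    rw [Nat.add_right_comm]
    refine query i fun a => ih a ?_
    exact (Finset.le_sup (f := fun a => (child a).depth) (Finset.mem_univ a)).trans
      (Nat.le_of_add_le_add_right hT)

lemma map {d : ℕ} {F : Input ι α → L} (hF : Computes d F) (g : L → L') :
    Computes d (fun x => g (F x)) :=
  hF.bind (e := 0) fun a => const 0 (g a)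

/-- A function depending only on the coordinates in a list is computed by querying them all. -/
lemma of_dependsOn [DecidableEq ι] [Nonempty L] (l : List ι) (F : Input ι α → L)
    (hF : ∀ x y : Input ι α, (∀ i ∈ l, x i = y i) → F x = F y) : Computes l.length F := by
  induction l generalizing F with
  | nil =>
    obtain hE | ⟨⟨x₀⟩⟩ := isEmpty_or_nonempty (Input ι α)
    · exact ⟨.leaf (Classical.arbitrary L), Nat.zero_le _, fun x => hE.elim x⟩
    · exact ⟨.leaf (F x₀), Nat.zero_le _, fun x => hF _ _ (by simp)⟩
  | cons i l ih =>
    have h := query (d := l.length) i (G := fun a x => F (Function.update x i a)) fun a => by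
      refine ih _ fun x y hxy => hF _ _ fun j hj => ?_
      by_cases hji : j = i
      · subst hji; simp
      · simpa [hji] using hxy j (by simpa [hji] using hj)
    simpa using h

lemma of_fintype [Fintype ι] [Nonempty L] (F : Input ι α → L) :
    Computes (Fintype.card ι) F := by
  classical
  have := of_dependsOn (Finset.univ.toList) F fun x y h => congrArg F (funext fun i => h i (by simp))
  simpa using this

end Computes

/-- A decision tree is a randomized algorithm with success probability one. -/
lemma exists_pmf_of_computes {f : PartialFn ι α} {d : ℕ} (h : Computes d f) :
    ∃ μ : PMF (DTree ι α (Option Bool)), (∀ T ∈ μ.support, T.depth ≤ d) ∧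
      ∀ x b, f x = some b → 2 / 3 ≤ μ.toOuterMeasure {T | T.eval x = some b} := by
  obtain ⟨T, hT, hTf⟩ := h
  refine ⟨PMF.pure T, by simpa using hT, fun x b hx => ?_⟩
  have hT' : T.eval x = some b := (hTf x).trans hx
  rw [PMF.toOuterMeasure_pure_apply, if_pos (by simpa using hT')]
  exact ENNReal.div_le_of_le_mul (by norm_num)

lemma Rq_le_of_computes {f : PartialFn ι α} {d : ℕ} (h : Computes d f) : Rq f ≤ d :=
  Nat.sInf_le (exists_pmf_of_computes h)

/-- On a finite index set, some randomized algorithm achieves the complexity `Rq f`. -/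
lemma exists_pmf_depth_le_Rq [Fintype ι] (f : PartialFn ι α) :
    ∃ μ : PMF (DTree ι α (Option Bool)), (∀ T ∈ μ.support, T.depth ≤ Rq f) ∧
      ∀ x b, f x = some b → 2 / 3 ≤ μ.toOuterMeasure {T | T.eval x = some b} :=
  Nat.sInf_mem (s := {d | ∃ μ : PMF (DTree ι α (Option Bool)), (∀ T ∈ μ.support, T.depth ≤ d) ∧
    ∀ x b, f x = some b → 2 / 3 ≤ μ.toOuterMeasure {T | T.eval x = some b}})
    ⟨_, exists_pmf_of_computes (Computes.of_fintype f)⟩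

end Trees

section Minimax

/-- If every probability vector has average at least `a` against some member of the finite set `V`,
then some convex combination of members of `V` is at least `a` in every coordinate. -/
lemma exists_mem_convexHull_forall_le {X : Type} [Fintype X] {V : Set (X → ℝ)} (hV : V.Finite)
    (hne : V.Nonempty) (a : ℝ)
    (h : ∀ w : X → ℝ, (∀ x, 0 ≤ w x) → ∑ x, w x = 1 → ∃ v ∈ V, a ≤ ∑ x, w x * v x) :
    ∃ p ∈ convexHull ℝ V, ∀ x, a ≤ p x := by
  classical
  by_contra! hcon
  obtain ⟨g, r, s, hr, hrs, hs⟩ := geometric_hahn_banach_compact_closed (E := X → ℝ)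
    (convex_convexHull ℝ V) (hV.isCompact_convexHull (𝕜 := ℝ))
    (convex_Ici (𝕜 := ℝ) (fun _ : X => a))
    isClosed_Ici (Set.disjoint_left.2 fun p hp hp' => by
      obtain ⟨x, hx⟩ := hcon p hp
      exact absurd (hp' x) (not_le.2 hx))
  have hg : ∀ v : X → ℝ, g v = ∑ x, g (Pi.single x 1) * v x := fun v => by
    conv_lhs => rw [pi_eq_sum_univ' v]
    simp [mul_comm]
  have hpos : ∀ x, 0 ≤ g (Pi.single x 1) := by
    intro x
    by_contra! hx
    have hbase := hs (fun _ => a) (Set.mem_Ici.2 le_rfl)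
    set y := g (Pi.single x 1)
    have ht : 0 ≤ (g (fun _ => a) - s) / (-y) := div_nonneg (by linarith) (by linarith)
    have := hs ((fun _ => a) + ((g (fun _ => a) - s) / (-y)) • Pi.single x 1)
      (Set.mem_Ici.2 (le_add_of_nonneg_right (smul_nonneg ht
        (Pi.single_nonneg.2 zero_le_one))))
    rw [map_add, map_smul, smul_eq_mul] at this
    have hy : (g (fun _ => a) - s) / (-y) * y = -(g (fun _ => a) - s) := by
      rw [div_neg, neg_mul, div_mul_cancel₀ _ hx.ne]
    change s < g (fun _ => a) + (g (fun _ => a) - s) / (-y) * y at this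
    linarith
  obtain ⟨v₀, hv₀⟩ := hne
  have hsum : 0 < ∑ x, g (Pi.single x 1) := by
    refine (Finset.sum_nonneg fun x _ => hpos x).lt_of_ne fun h0 => ?_
    have hz : ∀ x, g (Pi.single x 1) = 0 := fun x =>
      (Finset.sum_eq_zero_iff_of_nonneg fun x _ => hpos x).1 h0.symm x (Finset.mem_univ x)
    have h1 := hr v₀ (subset_convexHull ℝ V hv₀)
    have h2 := hs (fun _ => a) (Set.mem_Ici.2 le_rfl)
    rw [hg] at h1 h2
    simp only [hz, zero_mul, Finset.sum_const_zero] at h1 h2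
    linarith
  obtain ⟨v, hv, hav⟩ := h (fun x => g (Pi.single x 1) / ∑ x, g (Pi.single x 1))
    (fun x => div_nonneg (hpos x) hsum.le) (by rw [← Finset.sum_div, div_self hsum.ne'])
  have h1 := hr v (subset_convexHull ℝ V hv)
  have h2 := hs (fun _ => a) (Set.mem_Ici.2 le_rfl)
  rw [hg] at h1 h2
  rw [← Finset.sum_mul] at h2
  simp only [div_mul_eq_mul_div] at hav
  rw [← Finset.sum_div, le_div_iff₀ hsum] at hav
  linarith

/-- Yao's principle, in the direction that bounds `Rq` from above. -/
lemma Rq_le_of_forall_distribution {ι : Type} [Fintype ι] {α : ι → ℕ} (f : PartialFn ι α)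
    [Fintype {x // f x ≠ none}] (d : ℕ)
    (h : ∀ w : {x // f x ≠ none} → ℝ, (∀ x, 0 ≤ w x) → ∑ x, w x = 1 →
      ∃ F : Input ι α → Option Bool, Computes d F ∧
        2 / 3 ≤ ∑ x, w x * if F x = f x then 1 else 0) : Rq f ≤ d := by
  classical
  let succ : (Input ι α → Option Bool) → {x // f x ≠ none} → ℝ :=
    fun F x => if F x = f x then 1 else 0
  have hfin : (succ '' {F | Computes d F}).Finite := Set.toFinite _
  obtain ⟨p, hp, hp'⟩ := exists_mem_convexHull_forall_le hfin
    ⟨_, _, Computes.const d none, rfl⟩ (2 / 3) fun w hw hw1 => by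
      obtain ⟨F, hF, hF'⟩ := h w hw hw1
      exact ⟨_, ⟨F, hF, rfl⟩, hF'⟩
  obtain ⟨κ, _, q, v, hq, hq1, hv, rfl⟩ := mem_convexHull_iff_exists_fintype.1 hp
  choose F hF hFv using hv
  choose T hT hTF using hF
  have hq1' : ∑ j, ENNReal.ofReal (q j) = 1 := by
    rw [← ENNReal.ofReal_sum_of_nonneg fun j _ => hq j, hq1, ENNReal.ofReal_one]
  refine Nat.sInf_le ⟨(PMF.ofFintype (fun j => ENNReal.ofReal (q j)) hq1').map T, ?_, ?_⟩
  · intro t ht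
    obtain ⟨j, -, rfl⟩ := (PMF.mem_support_map_iff _ _ _).1 ht
    exact hT j
  · intro x b hx
    have hpx := hp' ⟨x, by simp [hx]⟩
    rw [PMF.toOuterMeasure_map_apply, PMF.toOuterMeasure_apply_fintype]
    have h23 : (2 / 3 : ℝ≥0∞) = ENNReal.ofReal (2 / 3) := by
      rw [ENNReal.ofReal_div_of_pos (by norm_num)]; norm_num
    rw [h23]
    refine (ENNReal.ofReal_le_ofReal hpx).trans ?_
    rw [Finset.sum_apply, ENNReal.ofReal_sum_of_nonneg]
    · refine Finset.sum_le_sum fun j _ => ?_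
      rw [Pi.smul_apply, ← hFv]
      by_cases hj : F j x = f x
      · rw [Set.indicator_of_mem (by simp [hTF, hj, hx])]
        simp [succ, hj]
      · simp [succ, hj]
    · intro j _
      rw [Pi.smul_apply, ← hFv]
      exact mul_nonneg (hq j) (by simp only [succ]; split_ifs <;> norm_num)

end Minimax

section Cells

variable {ι : Type} {α : ι → ℕ} {L : Type} {c k : ℕ}

/-- The cheat sheet cells queried by a decision tree on a given input. -/
def cells : DTree (CSIdx ι c k) (csAlphabet α c k) L → Input (CSIdx ι c k) (csAlphabet α c k) →
    Finset (Fin (2 ^ c))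
  | .leaf _, _ => ∅
  | .node (.inl p) child, z => cells (child (z (.inl p))) z
  | .node (.inr q) child, z => insert q.1 (cells (child (z (.inr q))) z)

/-- The cheat sheet input made of the copies `X` and the cells `Y`. -/
def csInput (X : Fin c → Input ι α) (Y : Fin (2 ^ c) → Fin c → Fin k → Fin 2) :
    Input (CSIdx ι c k) (csAlphabet α c k)
  | .inl p => X p.1 p.2
  | .inr q => Y q.1 q.2.1 q.2.2

lemma card_cells_le (t : DTree (CSIdx ι c k) (csAlphabet α c k) L)
    (z : Input (CSIdx ι c k) (csAlphabet α c k)) : (cells t z).card ≤ t.depth := by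
  induction t with
  | leaf b => simp [cells]
  | node i child ih =>
    have h : (cells (child (z i)) z).card ≤ Finset.univ.sup fun a => (child a).depth :=
      (ih _).trans (Finset.le_sup (f := fun a => (child a).depth) (Finset.mem_univ _))
    rcases i with p | q
    · simp only [cells, DTree.depth]; omega
    · simp only [cells, DTree.depth]
      exact (Finset.card_insert_le _ _).trans (Nat.add_le_add_right h 1)

/-- A tree that does not query the cell `ℓ` cannot notice a change in that cell. -/
lemma eval_eq_of_notMem_cells (t : DTree (CSIdx ι c k) (csAlphabet α c k) L)
    (X : Fin c → Input ι α) {Y Y' : Fin (2 ^ c) → Fin c → Fin k → Fin 2} {ℓ : Fin (2 ^ c)}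
    (hY : ∀ m, m ≠ ℓ → Y m = Y' m) (hℓ : ℓ ∉ cells t (csInput X Y)) :
    t.eval (csInput X Y) = t.eval (csInput X Y') := by
  induction t with
  | leaf b => rfl
  | node i child ih =>
    rcases i with p | q
    · exact ih _ hℓ
    · simp only [cells, Finset.mem_insert, not_or] at hℓ
      have hq : csInput X Y (.inr q) = csInput X Y' (.inr q) := by
        change Y q.1 q.2.1 q.2.2 = Y' q.1 q.2.1 q.2.2
        rw [hY q.1 (Ne.symm hℓ.1)]
      simp only [DTree.eval]
      rw [← hq]
      exact ih _ hℓ.2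

/-- The cells queried by a tree, as a function of one of the copies, can be computed by
simulating the tree. -/
lemma computes_cells (t : DTree (CSIdx ι c k) (csAlphabet α c k) L) (X : Fin c → Input ι α)
    (Y : Fin (2 ^ c) → Fin c → Fin k → Fin 2) (i : Fin c) :
    Computes t.depth (fun x : Input ι α => cells t (csInput (Function.update X i x) Y)) := by
  induction t with
  | leaf b => exact Computes.const _ _
  | node r child ih =>
    have ih' : ∀ a, Computes (Finset.univ.sup fun a => (child a).depth)
        (fun x : Input ι α => cells (child a) (csInput (Function.update X i x) Y)) := fun a =>
      (ih a).mono (Finset.le_sup (f := fun a => (child a).depth) (Finset.mem_univ a))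
    simp only [DTree.depth]
    rcases r with ⟨j, p⟩ | q
    · by_cases hj : j = i
      · subst hj
        have := Computes.query p (G := fun (a : Fin (α p)) (x : Input ι α) =>
          cells (child a) (csInput (Function.update X j x) Y)) ih'
        convert this using 2 with x
        simp [cells, csInput]
      · refine Computes.mono (Nat.le_succ _) ?_
        convert ih' (X j p) using 2 with x
        simp [cells, csInput, hj]
    · exact ((ih' (Y q.1 q.2.1 q.2.2)).map (insert q.1)).mono (Nat.le_succ _)

/-- The cells queried by at least one of several trees. -/
def unionCells (ts : List (DTree (CSIdx ι c k) (csAlphabet α c k) L))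
    (z : Input (CSIdx ι c k) (csAlphabet α c k)) : Finset (Fin (2 ^ c)) :=
  ts.foldr (fun t s => cells t z ∪ s) ∅

lemma mem_unionCells {ts : List (DTree (CSIdx ι c k) (csAlphabet α c k) L)}
    {z : Input (CSIdx ι c k) (csAlphabet α c k)} {ℓ : Fin (2 ^ c)} :
    ℓ ∈ unionCells ts z ↔ ∃ t ∈ ts, ℓ ∈ cells t z := by
  induction ts with
  | nil => simp [unionCells]
  | cons t ts ih => simpa [unionCells] using or_congr_right ih

lemma card_unionCells_le {ts : List (DTree (CSIdx ι c k) (csAlphabet α c k) L)} {d : ℕ}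
    (hd : ∀ t ∈ ts, t.depth ≤ d) (z : Input (CSIdx ι c k) (csAlphabet α c k)) :
    (unionCells ts z).card ≤ ts.length * d := by
  induction ts with
  | nil => simp [unionCells]
  | cons t ts ih =>
    have h1 := (card_cells_le t z).trans (hd t (by simp))
    have h2 := ih fun t ht => hd t (by simp [ht])
    have h3 := Finset.card_union_le (cells t z) (unionCells ts z)
    rw [List.length_cons, Nat.succ_mul]
    change (cells t z ∪ unionCells ts z).card ≤ _
    omega

lemma computes_unionCells {ts : List (DTree (CSIdx ι c k) (csAlphabet α c k) L)} {d : ℕ}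
    (hd : ∀ t ∈ ts, t.depth ≤ d) (X : Fin c → Input ι α)
    (Y : Fin (2 ^ c) → Fin c → Fin k → Fin 2) (i : Fin c) :
    Computes (ts.length * d)
      (fun x : Input ι α => unionCells ts (csInput (Function.update X i x) Y)) := by
  induction ts with
  | nil => exact Computes.const _ _
  | cons t ts ih =>
    rw [List.length_cons, Nat.succ_mul, Nat.add_comm]
    exact ((computes_cells t X Y i).mono (hd t (by simp))).bind
      (G := fun s x => s ∪ unionCells ts (csInput (Function.update X i x) Y))
      fun s => (ih fun t ht => hd t (by simp [ht])).map (s ∪ ·)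

lemma binToFin_injective (c : ℕ) : Function.Injective (binToFin c) := by
  have h : ∀ b : Fin c → Bool, binToFin c b =
      finFunctionFinEquiv (fun i => if b i then (1 : Fin 2) else 0) := by
    intro b
    have hs : (∑ i, if b i then 2 ^ (i : ℕ) else 0) =
        ((finFunctionFinEquiv (fun i => if b i then (1 : Fin 2) else 0) : Fin (2 ^ c)) : ℕ) := by
      rw [finFunctionFinEquiv_apply]
      refine Finset.sum_congr rfl fun i _ => ?_
      split_ifs <;> simp
    ext
    simp only [binToFin, hs]
    exact Nat.mod_eq_of_lt (Fin.isLt _)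
  intro b b' hb
  rw [h, h] at hb
  funext i
  have := congrFun (finFunctionFinEquiv.injective hb) i
  cases hbi : b i <;> cases hbi' : b' i <;> simp [hbi, hbi'] at this ⊢

lemma ofProp_eq_true {P : Prop} (h : P) : ofProp P = true := by simp [ofProp, h]

lemma ofProp_eq_false {P : Prop} (h : ¬P) : ofProp P = false := by simp [ofProp, h]

/-- An algorithm for the cheat sheet function must query, with probability at least `1/3`, the
cell addressed by the values of the copies when all cells are zero. -/
lemma third_le_mem_cells {f : PartialFn ι α} {hk : 0 < k}
    {φ : Input ι α → (Fin k → Fin 2) → Bool} (hφ : IsCertifying hk f φ) (hc : 0 < c)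
    (μ : PMF (DTree (CSIdx ι c k) (csAlphabet α c k) (Option Bool)))
    (hμ : ∀ z b, cheatSheet c f φ z = some b → 2 / 3 ≤ μ.toOuterMeasure {T | T.eval z = some b})
    (X : Fin c → Input ι α) (b : Fin c → Bool) (hb : ∀ i, f (X i) = some (b i)) :
    1 / 3 ≤ μ.toOuterMeasure {t | binToFin c b ∈ cells t (csInput X 0)} := by
  classical
  choose y hy using fun i => hφ.2.2.1 (X i) (b i) (hb i)
  have h0 := hμ (csInput X 0) false (congrArg some (ofProp_eq_false (by
    rintro ⟨b', -, hb'⟩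
    have h1 := hb' ⟨0, hc⟩
    have h2 := hφ.2.2.2 (X ⟨0, hc⟩)
    exact Bool.false_ne_true (h2.symm.trans h1))))
  have h1 := hμ (csInput X (Function.update 0 (binToFin c b) y)) true
    (congrArg some (ofProp_eq_true ⟨b, hb, fun i => by
      have hy' : csY (csInput (α := α) X (Function.update 0 (binToFin c b) y)) (binToFin c b) i
          = y i := by
        funext q; simp [csY, csInput]
      rw [hy']
      exact hy i⟩))
  set ℓ := binToFin c b
  have key : 2 / 3 + 2 / 3 ≤ 1 + μ.toOuterMeasure {t | ℓ ∈ cells t (csInput X 0)} := by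
    refine (add_le_add h0 h1).trans ?_
    rw [← μ.tsum_coe]
    simp only [PMF.toOuterMeasure_apply]
    rw [← ENNReal.tsum_add, ← ENNReal.tsum_add]
    refine ENNReal.tsum_le_tsum fun t => ?_
    by_cases ht : ℓ ∈ cells t (csInput X 0)
    · rw [Set.indicator_of_mem (s := {t | ℓ ∈ cells t (csInput X 0)}) ht]
      exact add_le_add (Set.indicator_le_self _ _ _) (Set.indicator_le_self _ _ _)
    · have he := eval_eq_of_notMem_cells t X (Y' := Function.update 0 ℓ y)
        (fun m hm => by simp [hm]) ht
      rw [Set.indicator_of_notMem (s := {t | ℓ ∈ cells t (csInput X 0)}) ht, add_zero]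
      simp only [Set.indicator_apply, Set.mem_ofPred_eq, he]
      split_ifs with h2 h3 h3
      · rw [h2] at h3; simp at h3
      all_goals simp
  have h43 : (2 / 3 + 2 / 3 : ℝ≥0∞) = 1 + 1 / 3 := by
    rw [← ENNReal.toReal_eq_toReal_iff' (by finiteness) (by finiteness)]
    rw [ENNReal.toReal_add (by finiteness) (by finiteness),
      ENNReal.toReal_add (by finiteness) (by finiteness)]
    norm_num
  rw [h43] at key
  exact (ENNReal.add_le_add_iff_left ENNReal.one_ne_top).1 key

end Cells

section Covering

variable {τ Z : Type} [Fintype Z]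

open Classical in
lemma exists_mem_support_third_le (μ : PMF τ) (E : τ → Z → Prop)
    (hE : ∀ z, 1 / 3 ≤ μ.toOuterMeasure {t | E t z}) (u : Z → ℝ) (hu : ∀ z, 0 ≤ u z) :
    ∃ t ∈ μ.support, (∑ z, u z) / 3 ≤ ∑ z, if E t z then u z else 0 := by
  by_contra! hcon
  set s := ∑ z, u z
  have hlt : ∀ t ∈ μ.support,
      ∑ z, (if E t z then ENNReal.ofReal (u z) else 0) < ENNReal.ofReal (s / 3) := by
    intro t ht
    have h1 := hcon t ht
    have h0 : 0 ≤ ∑ z, if E t z then u z else 0 :=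
      Finset.sum_nonneg fun z _ => by split_ifs; exacts [hu z, le_rfl]
    have h2 := (ENNReal.ofReal_lt_ofReal_iff (h0.trans_lt h1)).2 h1
    rw [ENNReal.ofReal_sum_of_nonneg fun z _ => by split_ifs; exacts [hu z, le_rfl]] at h2
    convert h2 using 3 with z
    split_ifs <;> simp
  have hle : ENNReal.ofReal (s / 3) ≤
      ∑' t, μ t * ∑ z, (if E t z then ENNReal.ofReal (u z) else 0) := by
    calc ENNReal.ofReal (s / 3) = ∑ z, ENNReal.ofReal (u z) * (1 / 3) := by
          rw [← Finset.sum_mul, ← ENNReal.ofReal_sum_of_nonneg fun z _ => hu z,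
            ENNReal.ofReal_div_of_pos (by norm_num)]
          simp [div_eq_mul_inv, s]
      _ ≤ ∑ z, ENNReal.ofReal (u z) * μ.toOuterMeasure {t | E t z} := by
          gcongr with z; exact hE z
      _ = ∑ z, ∑' t, μ t * (if E t z then ENNReal.ofReal (u z) else 0) := by
          refine Finset.sum_congr rfl fun z _ => ?_
          rw [PMF.toOuterMeasure_apply, ← ENNReal.tsum_mul_left]
          refine tsum_congr fun t => ?_
          by_cases h : E t z <;> simp [h, mul_comm]
      _ = _ := by
          rw [← Summable.tsum_finsetSum fun _ _ => ENNReal.summable]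
          simp only [Finset.mul_sum]
  obtain ⟨t₀, ht₀⟩ := μ.support_nonempty
  have hs : ∑' t, μ t * ENNReal.ofReal (s / 3) = ENNReal.ofReal (s / 3) := by
    rw [ENNReal.tsum_mul_right, μ.tsum_coe, one_mul]
  have hle' : ∀ t, μ t * ∑ z, (if E t z then ENNReal.ofReal (u z) else 0) ≤
      μ t * ENNReal.ofReal (s / 3) := by
    intro t
    by_cases ht : t ∈ μ.support
    · exact mul_le_mul_right (hlt t ht).le _
    · rw [(μ.apply_eq_zero_iff t).2 ht]; simp
  have := ENNReal.tsum_lt_tsum (i := t₀)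
    (ne_top_of_le_ne_top (by rw [hs]; finiteness) (ENNReal.tsum_le_tsum hle')) hle'
    ((ENNReal.mul_lt_mul_iff_right ht₀ (μ.apply_ne_top t₀)).2 (hlt t₀ ht₀))
  rw [hs] at this
  exact absurd hle (not_le.2 this)

open Classical in
/-- If each point is covered with probability at least `1/3` by a random member of a family, then
`r` well-chosen members leave at most a `(2/3)^r` fraction of the mass uncovered. -/
lemma exists_list_uncovered_le (μ : PMF τ) (E : τ → Z → Prop)
    (hE : ∀ z, 1 / 3 ≤ μ.toOuterMeasure {t | E t z}) (u : Z → ℝ) (hu : ∀ z, 0 ≤ u z) (r : ℕ) :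
    ∃ ts : List τ, ts.length = r ∧ (∀ t ∈ ts, t ∈ μ.support) ∧
      ∑ z, (if ∃ t ∈ ts, E t z then 0 else u z) ≤ (2 / 3) ^ r * ∑ z, u z := by
  induction r with
  | zero => exact ⟨[], rfl, by simp, by simp⟩
  | succ r ih =>
    obtain ⟨ts, hlen, hts, hle⟩ := ih
    obtain ⟨t, ht, htle⟩ := exists_mem_support_third_le μ E hE
      (fun z => if ∃ t ∈ ts, E t z then 0 else u z)
      (fun z => by split_ifs; exacts [le_rfl, hu z])
    refine ⟨t :: ts, by simp [hlen], by simpa using ⟨ht, hts⟩, ?_⟩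
    have hsplit : ∑ z, (if ∃ t' ∈ t :: ts, E t' z then 0 else u z) =
        ∑ z, (if ∃ t ∈ ts, E t z then 0 else u z) -
          ∑ z, (if E t z then (if ∃ t ∈ ts, E t z then 0 else u z) else 0) := by
      rw [← Finset.sum_sub_distrib]
      refine Finset.sum_congr rfl fun z _ => ?_
      by_cases h1 : E t z <;> by_cases h2 : ∃ t ∈ ts, E t z <;> simp [h1, h2]
    rw [hsplit, pow_succ]
    linarith

end Covering

section Halving

variable {c : ℕ}

/-- The members of `S` that agree with `b` on the first `m` coordinates. -/
def agreeing (S : Finset (Fin c → Bool)) (m : ℕ) (b : Fin c → Bool) : Finset (Fin c → Bool) :=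
  S.filter fun s => ∀ j : Fin c, (j : ℕ) < m → s j = b j

/-- The halving prediction of the `i`-th coordinate: the majority vote of the members of `S` that
agree with `b` on all earlier coordinates. -/
def halvingPred (S : Finset (Fin c → Bool)) (i : Fin c) (b : Fin c → Bool) : Bool :=
  decide (((agreeing S i b).filter fun s => s i = false).card ≤
    ((agreeing S i b).filter fun s => s i = true).card)

lemma halvingPred_congr (S : Finset (Fin c → Bool)) (i : Fin c) {b b' : Fin c → Bool}
    (h : ∀ j < i, b j = b' j) : halvingPred S i b = halvingPred S i b' := by
  have : agreeing S i b = agreeing S i b' :=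
    Finset.filter_congr fun s _ => forall_congr' fun j => imp_congr_right fun hj => by
      rw [h j hj]
  rw [halvingPred, halvingPred, this]

/-- The coordinates at which the halving prediction errs. -/
def mistakes (S : Finset (Fin c → Bool)) (b : Fin c → Bool) : Finset (Fin c) :=
  Finset.univ.filter fun i => halvingPred S i b ≠ b i

lemma two_mul_card_agreeing_succ_le {S : Finset (Fin c → Bool)} {b : Fin c → Bool} {i : Fin c}
    (hi : halvingPred S i b ≠ b i) :
    2 * (agreeing S (i + 1) b).card ≤ (agreeing S i b).card := by
  have hsub : agreeing S (i + 1) b = (agreeing S i b).filter fun s => s i = b i := by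
    ext s
    simp only [agreeing, Finset.mem_filter, and_assoc]
    refine and_congr_right fun _ => ⟨fun h => ⟨fun j hj => h j (by omega), h i (by omega)⟩, ?_⟩
    rintro ⟨h1, h2⟩ j hj
    obtain hj' | hj' := Nat.lt_succ_iff_lt_or_eq.1 hj
    · exact h1 j hj'
    · rw [Fin.ext hj', h2]
  have htot := Finset.card_filter_add_card_filter_not (s := agreeing S i b) (fun s => s i = true)
  simp only [Bool.not_eq_true] at htot
  rw [hsub]
  cases hb : b i <;> rw [hb] at hi <;> simp only [halvingPred, ne_eq, decide_eq_false_iff_not,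
    decide_eq_true_eq, not_le] at hi <;> omega

lemma two_pow_mistakes_lt_mul_card_le (S : Finset (Fin c → Bool)) (b : Fin c → Bool) (m : ℕ)
    (hm : m ≤ c) :
    2 ^ ((mistakes S b).filter fun i : Fin c => (i : ℕ) < m).card * (agreeing S m b).card ≤ S.card := by
  induction m with
  | zero => simp [agreeing]
  | succ m ih =>
    have ih := ih (by omega)
    have hmono : (agreeing S (m + 1) b).card ≤ (agreeing S m b).card :=
      Finset.card_le_card (Finset.monotone_filter_right _ fun s _ h j hj => h j (by omega))
    set i : Fin c := ⟨m, hm⟩ with hi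
    by_cases hmis : i ∈ mistakes S b
    · have hins : ((mistakes S b).filter fun j : Fin c => (j : ℕ) < m + 1) =
          insert i ((mistakes S b).filter fun j : Fin c => (j : ℕ) < m) := by
        ext j
        simp only [Finset.mem_filter, Finset.mem_insert]
        constructor
        · rintro ⟨h1, h2⟩
          obtain h3 | h3 := Nat.lt_succ_iff_lt_or_eq.1 h2
          · exact .inr ⟨h1, h3⟩
          · exact .inl (Fin.ext h3)
        · rintro (rfl | ⟨h1, h2⟩)
          · exact ⟨hmis, Nat.lt_succ_self m⟩
          · exact ⟨h1, by omega⟩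
      rw [hins, Finset.card_insert_of_notMem (by simp [hi]), pow_succ, mul_assoc]
      exact (Nat.mul_le_mul_left _
        (two_mul_card_agreeing_succ_le (i := i) (by simpa [mistakes] using hmis))).trans ih
    · have heq : ((mistakes S b).filter fun j : Fin c => (j : ℕ) < m + 1) =
          (mistakes S b).filter fun j : Fin c => (j : ℕ) < m := by
        refine Finset.filter_congr fun j hj => ⟨fun h => ?_, fun h => by omega⟩
        refine (Nat.lt_succ_iff_lt_or_eq.1 h).resolve_right fun h' => hmis ?_
        rwa [show i = j from Fin.ext h'.symm]
      rw [heq]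
      exact (Nat.mul_le_mul_left _ hmono).trans ih

lemma two_pow_card_mistakes_le {S : Finset (Fin c → Bool)} {b : Fin c → Bool} (hb : b ∈ S) :
    2 ^ (mistakes S b).card ≤ S.card := by
  have h := two_pow_mistakes_lt_mul_card_le S b c le_rfl
  have hpos : 0 < (agreeing S c b).card :=
    Finset.card_pos.2 ⟨b, by simp [agreeing, hb]⟩
  have hall : ((mistakes S b).filter fun i : Fin c => (i : ℕ) < c) = mistakes S b :=
    Finset.filter_true_of_mem fun i _ => i.isLt
  rw [hall] at h
  exact (Nat.le_mul_of_pos_right _ hpos).trans h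

end Halving

section ProductDistribution

variable {X : Type} [Fintype X] {c : ℕ}

lemma sum_prod_eq_one {w : X → ℝ} (hw : ∑ x, w x = 1) :
    ∑ y : Fin c → X, ∏ i, w (y i) = 1 := by
  classical
  have h := Finset.prod_univ_sum (fun _ : Fin c => Finset.univ) (fun _ x => w x)
  rw [Fintype.piFinset_univ] at h
  rw [← h]
  simp [hw]

/-- Resampling one coordinate does not change an expectation under a product distribution. -/
lemma sum_prod_mul_eq_resample {w : X → ℝ} (hw : ∑ x, w x = 1) (i : Fin c)
    (h : (Fin c → X) → ℝ) :
    ∑ y : Fin c → X, (∏ j, w (y j)) * h y =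
      ∑ y : Fin c → X, (∏ j, w (y j)) * ∑ x, w x * h (Function.update y i x) := by
  classical
  have h1 : ∑ y : Fin c → X, (∏ j, w (y j)) * h y =
      ∑ q : (Fin c → X) × X, (∏ j, w (q.1 j)) * w q.2 * h q.1 := by
    rw [Fintype.sum_prod_type]
    refine Finset.sum_congr rfl fun y _ => ?_
    dsimp only
    rw [← Finset.sum_mul, ← Finset.mul_sum, hw, mul_one]
  have h2 : ∑ y : Fin c → X, (∏ j, w (y j)) * ∑ x, w x * h (Function.update y i x) =
      ∑ q : (Fin c → X) × X, (∏ j, w (q.1 j)) * w q.2 * h (Function.update q.1 i q.2) := by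
    rw [Fintype.sum_prod_type]
    refine Finset.sum_congr rfl fun y _ => ?_
    rw [Finset.mul_sum]
    exact Finset.sum_congr rfl fun x _ => (mul_assoc _ _ _).symm
  rw [h1, h2]
  have hinv : Function.Involutive fun q : (Fin c → X) × X =>
      (Function.update q.1 i q.2, q.1 i) := fun q => by simp
  refine (Fintype.sum_bijective _ hinv.bijective _ _ fun q => ?_).symm
  dsimp only
  congr 1
  rw [← Finset.mul_prod_erase _ _ (Finset.mem_univ i),
    ← Finset.mul_prod_erase (a := i) _ (fun j => w (Function.update q.1 i q.2 j))
      (Finset.mem_univ i)]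
  have : ∏ j ∈ Finset.univ.erase i, w (Function.update q.1 i q.2 j) =
      ∏ j ∈ Finset.univ.erase i, w (q.1 j) :=
    Finset.prod_congr rfl fun j hj => by
      rw [Function.update_of_ne (Finset.ne_of_mem_erase hj)]
  rw [this, Function.update_self]
  ring

lemma exists_le_of_le_sum_mul {Y : Type} [Fintype Y] {W : Y → ℝ} (hW : ∀ y, 0 ≤ W y)
    (hW1 : ∑ y, W y = 1) {g : Y → ℝ} {a : ℝ} (h : a ≤ ∑ y, W y * g y) : ∃ y, a ≤ g y := by
  by_contra! hcon
  obtain ⟨y₀, -, hy₀⟩ := Finset.exists_ne_zero_of_sum_ne_zero (hW1 ▸ one_ne_zero)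
  have : ∑ y, W y * g y < ∑ y, W y * a :=
    Finset.sum_lt_sum (fun y _ => mul_le_mul_of_nonneg_left (hcon y).le (hW y))
      ⟨y₀, Finset.mem_univ _, mul_lt_mul_of_pos_left (hcon y₀) ((hW y₀).lt_of_ne' hy₀)⟩
  rw [← Finset.sum_mul, hW1, one_mul] at this
  linarith

end ProductDistribution

/-- The bit strings addressing a given set of cells. -/
def addresses {c : ℕ} (s : Finset (Fin (2 ^ c))) : Finset (Fin c → Bool) :=
  Finset.univ.filter fun b => binToFin c b ∈ s

lemma card_addresses_le {c : ℕ} (s : Finset (Fin (2 ^ c))) : (addresses s).card ≤ s.card :=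
  Finset.card_le_card_of_injOn (binToFin c) (fun b hb => by simpa [addresses] using hb)
    (binToFin_injective c).injOn

/-- With `10 * L` copies, four runs of an algorithm for the cheat sheet function reveal the value
of some copy, unless they make at least `2 ^ (L + 1)` queries. -/
lemma exists_predictor {ι : Type} {α : ι → ℕ} {L k : ℕ} (hL : 0 < L)
    (f : PartialFn ι α) [Fintype {x // f x ≠ none}] {hk : 0 < k}
    {φ : Input ι α → (Fin k → Fin 2) → Bool} (hφ : IsCertifying hk f φ)
    (μ : PMF (DTree (CSIdx ι (10 * L) k) (csAlphabet α (10 * L) k) (Option Bool))) {d : ℕ}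
    (hd : ∀ T ∈ μ.support, T.depth ≤ d) (hdL : 4 * d < 2 ^ (L + 1))
    (hμ : ∀ z b, cheatSheet (10 * L) f φ z = some b →
      2 / 3 ≤ μ.toOuterMeasure {T | T.eval z = some b})
    (w : {x // f x ≠ none} → ℝ) (hw : ∀ x, 0 ≤ w x) (hw1 : ∑ x, w x = 1) :
    ∃ F : Input ι α → Option Bool, Computes (4 * d) F ∧
      2 / 3 ≤ ∑ x, w x * if F x = f x then 1 else 0 := by
  classical
  let X : (Fin (10 * L) → {x // f x ≠ none}) → Fin (10 * L) → Input ι α := fun y i => (y i).1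
  let val : (Fin (10 * L) → {x // f x ≠ none}) → Fin (10 * L) → Bool :=
    fun y i => (f (y i)).getD false
  have hval : ∀ y i, f (X y i) = some (val y i) := fun y i => by
    obtain ⟨b, hb⟩ := Option.ne_none_iff_exists'.1 (y i).2
    simp [X, val, hb]
  let W : (Fin (10 * L) → {x // f x ≠ none}) → ℝ := fun y => ∏ i, w (y i)
  have hW : ∀ y, 0 ≤ W y := fun y => Finset.prod_nonneg fun i _ => hw _
  have hW1 : ∑ y, W y = 1 := sum_prod_eq_one hw1
  obtain ⟨ts, hlen, hts, hunc⟩ := exists_list_uncovered_le μ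
    (fun t y => binToFin _ (val y) ∈ cells t (csInput (X y) 0))
    (fun y => third_le_mem_cells hφ (by omega) μ hμ (X y) (val y) (hval y)) W hW 4
  have htd : ∀ t ∈ ts, t.depth ≤ d := fun t ht => hd t (hts t ht)
  let S : (Fin (10 * L) → Input ι α) → Finset (Fin (10 * L) → Bool) :=
    fun x => addresses (unionCells ts (csInput x 0))
  let correct : (Fin (10 * L) → {x // f x ≠ none}) → Fin (10 * L) → ℝ :=
    fun y i => if halvingPred (S (X y)) i (val y) = val y i then 1 else 0
  have hcorrect0 : ∀ y, 0 ≤ ∑ i, correct y i := fun y =>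
    Finset.sum_nonneg fun i _ => by simp only [correct]; split_ifs <;> norm_num
  have hcorrect : ∀ y, val y ∈ S (X y) → (9 * L : ℝ) ≤ ∑ i, correct y i := by
    intro y hy
    have h1 := two_pow_card_mistakes_le hy
    have h2 : (S (X y)).card ≤ 4 * d :=
      (card_addresses_le _).trans (hlen ▸ card_unionCells_le htd _)
    have h3 : (mistakes (S (X y)) (val y)).card < L + 1 :=
      (Nat.pow_lt_pow_iff_right (by norm_num)).1 ((h1.trans h2).trans_lt hdL)
    have h4 : ∑ i, correct y i + ((mistakes (S (X y)) (val y)).card : ℝ) = 10 * L := by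
      have := Finset.card_filter_add_card_filter_not (s := Finset.univ)
        (fun i => halvingPred (S (X y)) i (val y) = val y i)
      rw [Finset.card_univ, Fintype.card_fin] at this
      simp only [correct, Finset.sum_boole, mistakes]
      exact_mod_cast this
    have h5 : ((mistakes (S (X y)) (val y)).card : ℝ) ≤ L := by exact_mod_cast Nat.lt_succ_iff.1 h3
    linarith
  have htotal : (2 / 3 : ℝ) * (10 * L) ≤ ∑ i, ∑ y, W y * correct y i := by
    rw [Finset.sum_comm]
    simp only [← Finset.mul_sum]
    have hpt : ∀ y, (9 * L : ℝ) * (W y - if ∃ t ∈ ts,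
        binToFin _ (val y) ∈ cells t (csInput (X y) 0) then 0 else W y) ≤
        W y * ∑ i, correct y i := by
      intro y
      split_ifs with h
      · rw [sub_zero, mul_comm]
        exact mul_le_mul_of_nonneg_left
          (hcorrect y (by simpa [S, addresses, mem_unionCells] using h)) (hW y)
      · rw [sub_self, mul_zero]
        exact mul_nonneg (hW y) (hcorrect0 y)
    have hsum := Finset.sum_le_sum fun y (_ : y ∈ Finset.univ) => hpt y
    rw [← Finset.mul_sum, Finset.sum_sub_distrib, hW1] at hsum
    have hunc' : ∑ y, (if ∃ t ∈ ts, binToFin _ (val y) ∈ cells t (csInput (X y) 0)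
        then 0 else W y) ≤ (2 / 3) ^ 4 := by
      rw [hW1, mul_one] at hunc
      convert hunc
    refine le_trans ?_ hsum
    have hL' : (0 : ℝ) < L := by exact_mod_cast hL
    have hmul := mul_le_mul_of_nonneg_left hunc' hL'.le
    norm_num at hmul
    linarith
  obtain ⟨i, hi⟩ : ∃ i, 2 / 3 ≤ ∑ y, W y * correct y i := by
    by_contra! hcon
    have : ∑ i, ∑ y, W y * correct y i < ∑ _i : Fin (10 * L), (2 / 3 : ℝ) :=
      Finset.sum_lt_sum_of_nonempty ⟨⟨0, by omega⟩, Finset.mem_univ _⟩ fun i _ => hcon i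
    simp only [Finset.sum_const, Finset.card_univ, Fintype.card_fin, nsmul_eq_mul] at this
    push_cast at this
    linarith
  rw [sum_prod_mul_eq_resample hw1 i fun y => correct y i] at hi
  obtain ⟨y, hy⟩ := exists_le_of_le_sum_mul hW hW1 hi
  refine ⟨fun x => some (halvingPred (S (Function.update (X y) i x)) i (val y)), ?_, ?_⟩
  · exact (hlen ▸ computes_unionCells htd (X y) 0 i).map
      fun s => some (halvingPred (addresses s) i (val y))
  · refine hy.trans_eq (Finset.sum_congr rfl fun x _ => ?_)
    have hX : X (Function.update y i x) = Function.update (X y) i x.1 := by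
      funext j
      by_cases hj : j = i
      · subst hj; simp [X]
      · simp [X, hj]
    have hpred : halvingPred (S (Function.update (X y) i x.1)) i (val (Function.update y i x)) =
        halvingPred (S (Function.update (X y) i x.1)) i (val y) :=
      halvingPred_congr _ _ fun j hj => by simp [val, hj.ne]
    have hfx : f x.1 = some (val (Function.update y i x) i) := by
      rw [← hval]; simp [X]
    simp only [correct, hX, hpred, hfx, Option.some.injEq]

theorem Rq_le_four_mul_Rq_cheatSheet {n M k : ℕ} {hk : 0 < k}
    (f : PartialFn (Fin n) fun _ => M)
    {φ : Input (Fin n) (fun _ => M) → (Fin k → Fin 2) → Bool} (hφ : IsCertifying hk f φ)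
    (hn : 2 ≤ n) : Rq f ≤ 4 * Rq (cheatSheet (10 * Nat.log 2 n) f φ) := by
  classical
  obtain h | h := le_or_gt n (4 * Rq (cheatSheet (10 * Nat.log 2 n) f φ))
  · refine (Rq_le_of_computes ?_).trans h
    simpa using Computes.of_fintype f
  · obtain ⟨μ, hd, hμ⟩ := exists_pmf_depth_le_Rq (cheatSheet (10 * Nat.log 2 n) f φ)
    exact Rq_le_of_forall_distribution f _ fun w hw hw1 =>
      exists_predictor (Nat.log_pos (by norm_num) hn) f hφ μ hd
        (h.trans (Nat.lt_pow_succ_log_self (by norm_num) n)) hμ w hw hw1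

end QC

/-- For any partial `f : D → {0,1}` with `D ⊆ [M]^n` and any
certifying function `φ` for `f`, the cheat sheet version of `f` with
`c = 10·log₂ n` copies satisfies `R(f_CS) = Ω(R(f)/c) = Ω̃(R(f))`. -/
theorem cheat_sheet_randomized_lower_bound :
    ∃ C : ℝ, 0 < C ∧ ∀ (n M k : ℕ) (hk : 0 < k)
      (f : QC.PartialFn (Fin n) fun _ => M)
      (φ : QC.Input (Fin n) (fun _ => M) → (Fin k → Fin 2) → Bool),
      QC.IsCertifying hk f φ → 2 ≤ n →
      C * ((QC.Rq f : ℝ) / (10 * Nat.log 2 n : ℝ)) ≤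
        (QC.Rq (QC.cheatSheet (10 * Nat.log 2 n) f φ) : ℝ) := by
  refine ⟨1 / 4, by norm_num, fun n M k hk f φ hφ hn => ?_⟩
  have h : (QC.Rq f : ℝ) ≤ 4 * QC.Rq (QC.cheatSheet (10 * Nat.log 2 n) f φ) := by
    exact_mod_cast QC.Rq_le_four_mul_Rq_cheatSheet f hφ hn
  have hL : (1 : ℝ) ≤ Nat.log 2 n := by exact_mod_cast Nat.log_pos (by norm_num) hn
  have hdiv : (QC.Rq f : ℝ) / (10 * Nat.log 2 n : ℝ) ≤ QC.Rq f :=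
    div_le_self (Nat.cast_nonneg _) (by linarith)
  linarith
end
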